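/- (Main reduction theorem.) Let 𝒩 be a finite nonempty set of nonempty matroids and let k = min_{N ∈ 𝒩} χ(N) − 1. Then for all sufficiently large n: ex(𝒩, n) = 2ⁿ(1 − 2^{−k}) + ex(𝒟(𝒩), n − k), and an n-dimensional 𝒩-free matroid M satisfies |M| = ex(𝒩, n) if and only if M is isomorphic to (M₀)^{n,k} for some (n−k)-dimensional matroid M₀ that is 𝒟(𝒩)-free with |M₀| = ex(𝒟(𝒩), n − k). -/

import Mathlib

open scoped Classical

/-- `M` has an `N`-restriction: some injective linear image of `N` lies inside `M`. -/
def HasRestriction {α β : Type*} [AddCommMonoid α] [AddCommMonoid β]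
    [Module (ZMod 2) α] [Module (ZMod 2) β] (N : Set α) (M : Set β) : Prop :=
  ∃ ψ : α →ₗ[ZMod 2] β, Function.Injective ψ ∧ ψ '' N ⊆ M

/-- The set of distinct `N`-restrictions of `M` (as subsets of `M`). -/
def restrictionSet {α β : Type*} [AddCommMonoid α] [AddCommMonoid β]
    [Module (ZMod 2) α] [Module (ZMod 2) β] (N : Set α) (M : Set β) : Set (Set β) :=
  {S | S ⊆ M ∧ ∃ ψ : α →ₗ[ZMod 2] β, Function.Injective ψ ∧ S = ψ '' N}

/-- The Turán number for a single excluded matroid `N`. -/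
noncomputable def exNum {α : Type*} [AddCommMonoid α] [Module (ZMod 2) α] (N : Set α) (n : ℕ) : ℕ :=
  sSup {m | ∃ M : Set (Fin n → ZMod 2), 0 ∉ M ∧ ¬ HasRestriction N M ∧ M.ncard = m}

/-- The Turán number for a family of excluded matroids. -/
noncomputable def exNumFam (𝒩 : Set (Σ k : ℕ, Set (Fin k → ZMod 2))) (n : ℕ) : ℕ :=
  sSup {m | ∃ M : Set (Fin n → ZMod 2), 0 ∉ M ∧
    (∀ N ∈ 𝒩, ¬ HasRestriction N.2 M) ∧ M.ncard = m}

/-- The critical number of `M ⊆ 𝔽₂ⁿ`. -/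
noncomputable def critNum {n : ℕ} (M : Set (Fin n → ZMod 2)) : ℕ :=
  sInf {c | ∃ φ : (Fin n → ZMod 2) →ₗ[ZMod 2] (Fin c → ZMod 2), ∀ x ∈ M, φ x ≠ 0}

/-- The rank of `M`: dimension of its span. -/
noncomputable def rankM {n : ℕ} (M : Set (Fin n → ZMod 2)) : ℕ :=
  Module.finrank (ZMod 2) (Submodule.span (ZMod 2) M)

/-- `M` is a copy of `N^{n,t}`. -/
def IsCopyNnt {d : ℕ} (N : Set (Fin d → ZMod 2)) (n t : ℕ)
    (M : Set (Fin n → ZMod 2)) : Prop :=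
  ∃ F : Submodule (ZMod 2) (Fin n → ZMod 2), Module.finrank (ZMod 2) F = n - t ∧
    ∃ θ : (Fin d → ZMod 2) →ₗ[ZMod 2] (Fin n → ZMod 2),
      Function.Injective θ ∧ (∀ x, θ x ∈ F) ∧ M = θ '' N ∪ {x | x ∉ F}

/-- The decomposition family `𝒟(𝒩)`. -/
def decompFam (𝒩 : Set (Σ k : ℕ, Set (Fin k → ZMod 2))) (k : ℕ) :
    Set (Σ k : ℕ, Set (Fin k → ZMod 2)) :=
  {D | 0 ∉ D.2 ∧
    (∃ N ∈ 𝒩, ∃ M : Set (Fin N.1 → ZMod 2), IsCopyNnt D.2 N.1 k M ∧ HasRestriction N.2 M) ∧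
    ∀ D' : Σ k : ℕ, Set (Fin k → ZMod 2), 0 ∉ D'.2 →
      (∃ N ∈ 𝒩, ∃ M : Set (Fin N.1 → ZMod 2), IsCopyNnt D'.2 N.1 k M ∧ HasRestriction N.2 M) →
      HasRestriction D'.2 D.2 → HasRestriction D.2 D'.2}

/-- The cycle matroid of a simple graph. -/
def cycleMatroid {V : Type*} [DecidableEq V] (G : SimpleGraph V) : Set (V → ZMod 2) :=
  {x | ∃ u v, G.Adj u v ∧ x = Pi.single u 1 + Pi.single v 1}

/-!
Suppose `M` is `𝒩`-free with at least `2 ^ n - 2 ^ (n - k)` elements. By the geometric Erdős–Stone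
theorem `M` contains the union of the cosets `g c + G`, `c ≠ 0`, where `g` is defined on a space of
dimension `k` and `G` has large dimension. Since `M` does not allow `k + 1` in place of `k`, the
missing parts of the `2 ^ k` cosets `x + g c + G`, translated into `G`, almost cover `G`, for every
`x ∉ G ⊔ range g`. By the density of `M` they do so with almost no overlap for most `x`, and a
translation argument then shows that only one of them can be large. The `x` for which `x + G` is
the one with a large missing part are almost a coset of a subspace `F` of codimension `k`, and `M`
contains almost everything outside `F`.

A random choice of images now extends an embedding of any `D` into `M ∩ F` to one of `D^{d,k}` into
`M`, so `M ∩ F` is `𝒟(𝒩)`-free, while `|M| = 2 ^ n - 2 ^ (n - k) + |M ∩ F| - |Fᶜ \ M|`. Equality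
forces `Fᶜ ⊆ M`, that is, `M` is a copy of `(M ∩ F)^{n,k}`.
-/

open Finset Module
open scoped BigOperators

universe u

section LinearAlgebra

variable {K V W : Type*} [DivisionRing K] [AddCommGroup V] [Module K V] [AddCommGroup W]
  [Module K W]

theorem exists_submodule_le_finrank_eq {p : Submodule K V} {h : ℕ} (hh : h ≤ finrank K p) :
    ∃ q ≤ p, finrank K q = h := by
  obtain ⟨f, hf⟩ := exists_linearIndependent_of_le_finrank hh
  refine ⟨(Submodule.span K (Set.range f)).map p.subtype, Submodule.map_subtype_le _ _, ?_⟩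
  rw [Submodule.finrank_map_subtype_eq, finrank_span_eq_card hf, Fintype.card_fin]

theorem finrank_range_mkQ_comp_add_finrank_comap [FiniteDimensional K V] (f : V →ₗ[K] W)
    (p : Submodule K W) :
    finrank K (LinearMap.range (p.mkQ ∘ₗ f)) + finrank K (p.comap f) = finrank K V := by
  have hker : LinearMap.ker (p.mkQ ∘ₗ f) = p.comap f := by rw [LinearMap.ker_comp, p.ker_mkQ]
  rw [← hker]
  exact (p.mkQ ∘ₗ f).finrank_range_add_finrank_ker

variable [FiniteDimensional K V] [FiniteDimensional K W]

theorem finrank_comap_add_finrank {f : V →ₗ[K] W} (hf : Function.Surjective f)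
    (p : Submodule K W) :
    finrank K (p.comap f) + finrank K W = finrank K p + finrank K V := by
  have hrange : LinearMap.range (p.mkQ ∘ₗ f) = ⊤ :=
    LinearMap.range_eq_top.2 (p.mkQ_surjective.comp hf)
  have hrank := finrank_range_mkQ_comp_add_finrank_comap f p
  rw [hrange, finrank_top] at hrank
  have hquot := p.finrank_quotient_add_finrank
  lia

theorem finrank_add_finrank_le_finrank_comap_add (f : V →ₗ[K] W) (p : Submodule K W) :
    finrank K V + finrank K p ≤ finrank K (p.comap f) + finrank K W := by
  have hrank := finrank_range_mkQ_comp_add_finrank_comap f p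
  have hrange := (LinearMap.range (p.mkQ ∘ₗ f)).finrank_le
  have hquot := p.finrank_quotient_add_finrank
  lia

theorem finrank_sup_range_le (p : Submodule K W) (f : V →ₗ[K] W) :
    finrank K ↥(p ⊔ LinearMap.range f) ≤ finrank K p + finrank K V :=
  (Submodule.finrank_add_le_finrank_add_finrank _ _).trans
    (Nat.add_le_add_left (LinearMap.finrank_range_le f) _)

theorem exists_injective_comp_eq {U : Type*} [AddCommGroup U] [Module K U] {f : U →ₗ[K] V}
    {g : U →ₗ[K] W} (hf : Function.Injective f) (hg : Function.Injective g)
    (h : finrank K V ≤ finrank K W) :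
    ∃ σ : V →ₗ[K] W, Function.Injective σ ∧ σ ∘ₗ f = g := by
  obtain ⟨σ, hσ⟩ := finrank_le_iff_exists_linearMap.1 h
  obtain ⟨e, he⟩ := Submodule.exists_linearEquiv_restrict_eq
    ((LinearEquiv.ofInjective (σ ∘ₗ f) (hσ.comp hf)).symm ≪≫ₗ LinearEquiv.ofInjective g hg)
  refine ⟨e ∘ₗ σ, e.injective.comp hσ, LinearMap.ext fun a => ?_⟩
  simpa using (he (LinearEquiv.ofInjective (σ ∘ₗ f) (hσ.comp hf) a)).symm

theorem exists_linearMap_forall_notMem (F : Submodule K W)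
    (h : finrank K V + finrank K F ≤ finrank K W) :
    ∃ g : V →ₗ[K] W, ∀ v ≠ 0, g v ∉ F := by
  obtain ⟨R, hR⟩ := F.exists_isCompl
  have hdim := Submodule.finrank_add_eq_of_isCompl hR
  obtain ⟨f, hf⟩ := finrank_le_iff_exists_linearMap.1 (show finrank K V ≤ finrank K R by lia)
  refine ⟨R.subtype ∘ₗ f, fun v hv hvF => hv (hf ?_)⟩
  rw [map_zero, ← Submodule.coe_eq_zero]
  exact Submodule.disjoint_def.1 hR.disjoint _ hvF (f v).2

theorem surjective_applyₗ {K V W : Type*} [Field K] [AddCommGroup V] [Module K V]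
    [AddCommGroup W] [Module K W] {v : V} (hv : v ≠ 0) :
    Function.Surjective (LinearMap.applyₗ v : (V →ₗ[K] W) →ₗ[K] W) := by
  obtain ⟨l, hl⟩ := Module.Projective.exists_dual_eq_one K hv
  exact fun w => ⟨l.smulRight w, by simp [hl]⟩

end LinearAlgebra

section ZModTwo

theorem zmod_two_eq_zero_or_one : ∀ a : ZMod 2, a = 0 ∨ a = 1 := by decide

variable {V : Type*} [AddCommGroup V] [Module (ZMod 2) V]

theorem mem_span_singleton_zmod_two {s t : V} :
    s ∈ Submodule.span (ZMod 2) {t} ↔ s = 0 ∨ s = t := by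
  refine ⟨fun hs => ?_, ?_⟩
  · obtain ⟨c, rfl⟩ := Submodule.mem_span_singleton.1 hs
    obtain rfl | rfl := zmod_two_eq_zero_or_one c
    · exact .inl (zero_smul _ t)
    · exact .inr (one_smul _ t)
  · rintro (rfl | rfl)
    · exact Submodule.zero_mem _
    · exact Submodule.mem_span_singleton_self _

theorem coprod_toSpanSingleton_apply_eq_or {E : Type*} [AddCommGroup E] [Module (ZMod 2) E]
    (g : E →ₗ[ZMod 2] V) {l : Dual (ZMod 2) E} {c : E} (hl : l c = 1) (a b : V) {p : E × ZMod 2}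
    (hp : p ≠ 0) :
    let f := (g + l.smulRight b).coprod (LinearMap.toSpanSingleton (ZMod 2) V (a + b))
    (p.1 ≠ 0 ∧ (f p = g p.1 ∨ f p = a + g p.1 ∨ f p = b + g p.1)) ∨
      (p.1 ≠ c ∧ f p = a + b + g p.1) := by
  obtain ⟨e, s⟩ := p
  obtain rfl | rfl := zmod_two_eq_zero_or_one s <;>
    obtain hle | hle := zmod_two_eq_zero_or_one (l e)
  · exact .inl ⟨by simpa using hp, .inl (by simp [hle])⟩
  · exact .inl ⟨by simpa using hp, .inr (.inr (by simp [hle, add_comm]))⟩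
  · exact .inr ⟨by rintro rfl; simp [hl] at hle, by simp [hle, add_comm]⟩
  · refine .inl ⟨by rintro rfl; simp at hle, .inr (.inl ?_)⟩
    simp only [LinearMap.coprod_apply, LinearMap.add_apply, LinearMap.smulRight_apply, hle,
      one_smul, LinearMap.toSpanSingleton_apply]
    rw [add_comm a, add_assoc, ← add_assoc b, ZModModule.add_self, zero_add, add_comm]

theorem natCard_eq_two_pow_finrank [Finite V] : Nat.card V = 2 ^ finrank (ZMod 2) V := by
  simp [Module.natCard_eq_pow_finrank (K := ZMod 2)]

end ZModTwo

section Density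

variable {α β ι : Type*}

/-- The proportion `|S| / |α|` of points of a finite nonempty type `α` that lie in `S`, as a real
number. -/
noncomputable def density (S : Set α) : ℝ := S.ncard / Nat.card α

theorem density_nonneg (S : Set α) : 0 ≤ density S := by unfold density; positivity

theorem density_empty : density (∅ : Set α) = 0 := by simp [density]

theorem nonempty_of_density_pos {S : Set α} (h : 0 < density S) : S.Nonempty := by
  contrapose! h
  rw [h, density_empty]

theorem density_preimage_equiv (e : α ≃ β) (S : Set β) : density (e ⁻¹' S) = density S := by
  rw [density, density, Nat.card_congr e, Set.ncard_preimage_of_injective_subset_range e.injective]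
  simp

theorem density_eq_expect [Fintype α] (S : Set α) : density S = 𝔼 x, S.indicator 1 x := by
  simp [density, Fintype.expect_eq_sum_div_card, Set.ncard_eq_toFinset_card', Set.indicator_apply]

variable [Finite α]

theorem density_mono {S T : Set α} (h : S ⊆ T) : density S ≤ density T := by
  unfold density
  gcongr
  exact Set.toFinite T

theorem density_union_add_inter (S T : Set α) :
    density (S ∪ T) + density (S ∩ T) = density S + density T := by
  simp only [density, ← add_div]
  exact_mod_cast congrArg (fun m : ℕ => (m : ℝ) / Nat.card α) (Set.ncard_union_add_ncard_inter S T)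

theorem density_union_le (S T : Set α) : density (S ∪ T) ≤ density S + density T := by
  linarith [density_union_add_inter S T, density_nonneg (S ∩ T)]

theorem density_biUnion_le (s : Finset ι) (S : ι → Set α) :
    density (⋃ i ∈ s, S i) ≤ ∑ i ∈ s, density (S i) := by
  induction s using Finset.induction_on with
  | empty => simp [density_empty]
  | insert i s hi ih =>
    rw [Finset.set_biUnion_insert, Finset.sum_insert hi]
    exact (density_union_le _ _).trans (by gcongr)

theorem density_iUnion_le [Fintype ι] (S : ι → Set α) :
    density (⋃ i, S i) ≤ ∑ i, density (S i) := by
  simpa using density_biUnion_le Finset.univ S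

theorem density_iUnion_add_density_inter_le [Fintype ι] (S : ι → Set α) {i j : ι} (hij : i ≠ j) :
    density (⋃ k, S k) + density (S i ∩ S j) ≤ ∑ k, density (S k) := by
  set T := ⋃ k ∈ Finset.univ.erase i, S k
  have hunion : ⋃ k, S k = S i ∪ T := by
    rw [← Finset.set_biUnion_insert, Finset.insert_erase (Finset.mem_univ i)]
    simp
  have hinter : density (S i ∩ S j) ≤ density (S i ∩ T) := density_mono <|
    Set.inter_subset_inter_right _ (Set.subset_biUnion_of_mem (u := S) (by simp [hij.symm]))
  rw [hunion, ← Finset.add_sum_erase _ _ (Finset.mem_univ i)]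
  linarith [density_union_add_inter (S i) T, density_biUnion_le (Finset.univ.erase i) S]

variable [Nonempty α]

theorem density_univ : density (Set.univ : Set α) = 1 := by simp [density]

theorem density_le_one (S : Set α) : density S ≤ 1 :=
  (density_mono S.subset_univ).trans density_univ.le

theorem density_compl (S : Set α) : density Sᶜ = 1 - density S := by
  have := density_union_add_inter S Sᶜ
  rw [Set.union_compl_self, Set.inter_compl_self, density_univ, density_empty] at this
  linarith

theorem exists_forall_notMem_of_sum_density_lt_one {s : Finset ι} {S : ι → Set α}
    (h : ∑ i ∈ s, density (S i) < 1) : ∃ x, ∀ i ∈ s, x ∉ S i := by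
  have hpos : 0 < density (⋃ i ∈ s, S i)ᶜ := by
    linarith [density_compl (⋃ i ∈ s, S i), density_biUnion_le s S]
  obtain ⟨x, hx⟩ := nonempty_of_density_pos hpos
  exact ⟨x, by simpa using hx⟩

end Density

section DensityGroup

variable {A B : Type*} [AddCommGroup A] [AddCommGroup B]

theorem density_preimage_add_right (S : Set A) (t : A) : density ((· + t) ⁻¹' S) = density S :=
  density_preimage_equiv (Equiv.addRight t) S

theorem density_preimage_of_surjective [Finite A] [Finite B] {f : A →+ B}
    (hf : Function.Surjective f) (S : Set B) : density (f ⁻¹' S) = density S := by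
  have := Fintype.ofFinite A
  have := Fintype.ofFinite B
  -- Average over all translates of `S`.
  calc density (f ⁻¹' S) = 𝔼 _b : B, 𝔼 a, S.indicator (1 : B → ℝ) (f a) := by
        rw [Fintype.expect_const, density_eq_expect]; rfl
    _ = 𝔼 b : B, 𝔼 a, S.indicator (1 : B → ℝ) (f a + b) := by
        refine Finset.expect_congr rfl fun b _ => ?_
        obtain ⟨a', rfl⟩ := hf b
        exact Fintype.expect_equiv (Equiv.subRight a') _ _ fun a => by simp
    _ = 𝔼 a, 𝔼 b : B, S.indicator (1 : B → ℝ) (f a + b) := Finset.expect_comm ..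
    _ = 𝔼 _a : A, density S := by
        refine Finset.expect_congr rfl fun a _ => ?_
        rw [density_eq_expect]
        exact Fintype.expect_equiv (Equiv.addLeft (f a)) _ _ fun b => rfl
    _ = density S := Fintype.expect_const _

theorem expect_density_inter_translate [Fintype A] (P Q : Set A) :
    𝔼 t, density {y | y + t ∈ P ∧ y ∈ Q} = density P * density Q := by
  have hmul (t y : A) : Set.indicator {y | y + t ∈ P ∧ y ∈ Q} (1 : A → ℝ) y =
      P.indicator 1 (y + t) * Q.indicator 1 y := by
    by_cases hP : y + t ∈ P <;> by_cases hQ : y ∈ Q <;> simp [hP, hQ]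
  calc 𝔼 t, density {y | y + t ∈ P ∧ y ∈ Q}
      = 𝔼 y, (𝔼 t, P.indicator (1 : A → ℝ) (y + t)) * Q.indicator 1 y := by
        simp only [density_eq_expect, hmul, Finset.expect_mul]
        exact Finset.expect_comm ..
    _ = 𝔼 y, density P * Q.indicator (1 : A → ℝ) y := by
        refine Finset.expect_congr rfl fun y _ => congrArg (· * _) ?_
        rw [density_eq_expect]
        exact Fintype.expect_equiv (Equiv.addLeft y) _ _ fun t => rfl
    _ = density P * density Q := by rw [← Finset.mul_expect, density_eq_expect Q]

theorem exists_mul_le_density_inter_translate [Finite A] (P Q : Set A) :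
    ∃ t, density P * density Q ≤ density {y | y + t ∈ P ∧ y ∈ Q} := by
  have := Fintype.ofFinite A
  obtain ⟨t, -, ht⟩ := Finset.exists_le_of_le_expect Finset.univ_nonempty
    (expect_density_inter_translate P Q).ge
  exact ⟨t, ht⟩

end DensityGroup

section DensitySubmodule

variable {V : Type u} [AddCommGroup V] [Module (ZMod 2) V] [Finite V]

theorem density_submodule (U : Submodule (ZMod 2) V) :
    density (U : Set V) = 2 ^ finrank (ZMod 2) U / 2 ^ finrank (ZMod 2) V := by
  have hU : (U : Set V).ncard = 2 ^ finrank (ZMod 2) U := natCard_eq_two_pow_finrank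
  rw [density, hU, natCard_eq_two_pow_finrank (V := V)]
  push_cast
  rfl

end DensitySubmodule

theorem exists_forall_density_submodule_le (d : ℕ) {ε : ℝ} (hε : 0 < ε) :
    ∃ n₀, ∀ (V : Type u) [AddCommGroup V] [Module (ZMod 2) V] [Finite V],
      n₀ ≤ finrank (ZMod 2) V → ∀ U : Submodule (ZMod 2) V, finrank (ZMod 2) U ≤ d →
        density (U : Set V) ≤ ε := by
  obtain ⟨m, hm⟩ := exists_pow_lt_of_lt_one hε (show (1 / 2 : ℝ) < 1 by norm_num)
  refine ⟨d + m, fun V _ _ _ hV U hU => ?_⟩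
  calc density (U : Set V) = 2 ^ finrank (ZMod 2) U / 2 ^ finrank (ZMod 2) V := density_submodule U
    _ ≤ 2 ^ d / 2 ^ (d + m) := by gcongr <;> norm_num
    _ = (1 / 2) ^ m := by rw [pow_add]; field_simp; simp
    _ ≤ ε := hm.le

theorem exists_ne_zero_le_density_inter_translate {A : Type*} [AddCommGroup A] [Finite A]
    {S : Set A} (h : density {(0 : A)} < density S ^ 2) :
    ∃ t ≠ 0, density S ^ 2 - density {(0 : A)} ≤ density {y | y + t ∈ S ∧ y ∈ S} := by
  have := Fintype.ofFinite A
  have hmean : density S ^ 2 - density {(0 : A)} =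
      𝔼 t, (density {y | y + t ∈ S ∧ y ∈ S} - Set.indicator {0} 1 t) := by
    rw [Finset.expect_sub_distrib, expect_density_inter_translate, ← density_eq_expect, sq]
  obtain ⟨t, -, ht⟩ := Finset.exists_le_of_le_expect Finset.univ_nonempty hmean.le
  obtain rfl | ht0 := eq_or_ne t 0
  · have := density_le_one {y | y + 0 ∈ S ∧ y ∈ S}
    simp only [Set.indicator_of_mem (Set.mem_singleton (0 : A)), Pi.one_apply] at ht
    linarith
  · exact ⟨t, ht0, by simpa [ht0] using ht⟩

section DenseCosets

/-- Every subset of `V` of density at least `ε` contains a coset of an `h`-dimensional subspace. -/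
def DenseSetsContainCosets (V : Type u) [AddCommGroup V] [Module (ZMod 2) V] (h : ℕ) (ε : ℝ) :
    Prop :=
  ∀ S : Set V, ε ≤ density S → ∃ W : Submodule (ZMod 2) V, finrank (ZMod 2) W = h ∧
    ∃ y, ∀ w ∈ W, y + w ∈ S

variable {V : Type u} [AddCommGroup V] [Module (ZMod 2) V] {h : ℕ} {ε : ℝ}

theorem denseSetsContainCosets_zero (hε : 0 < ε) : DenseSetsContainCosets V 0 ε := by
  intro S hS
  obtain ⟨y, hy⟩ := nonempty_of_density_pos (hε.trans_le hS)
  refine ⟨⊥, finrank_bot _ _, y, fun w hw => ?_⟩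
  rwa [(Submodule.mem_bot _).1 hw, add_zero]

theorem preimage_image_mkQ_span_singleton {t : V} {B : Set V} (hB : ∀ y ∈ B, y + t ∈ B) :
    (Submodule.span (ZMod 2) {t}).mkQ ⁻¹' ((Submodule.span (ZMod 2) {t}).mkQ '' B) = B := by
  refine (Set.subset_preimage_image _ B).antisymm' ?_
  rintro y ⟨b, hb, hby⟩
  obtain h | h := mem_span_singleton_zmod_two.1 ((Submodule.Quotient.eq _).1 hby.symm)
  · rwa [sub_eq_zero.1 h]
  · rw [eq_add_of_sub_eq' h]
    exact hB b hb

/- If `S` meets its translate by `t` in a set `B`, then `B` is a union of cosets of `{0, t}`, so a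
coset inside the image of `B` modulo `t` pulls back to a coset inside `S` of one dimension more. -/
theorem DenseSetsContainCosets.succ [Finite V] (hε : 0 < ε) (h0 : density {(0 : V)} ≤ ε ^ 2 / 2)
    (hq : ∀ t : V, t ≠ 0 →
      DenseSetsContainCosets (V ⧸ Submodule.span (ZMod 2) {t}) h (ε ^ 2 / 2)) :
    DenseSetsContainCosets V (h + 1) ε := by
  intro S hS
  have hSsq : ε ^ 2 ≤ density S ^ 2 := by gcongr
  obtain ⟨t, ht0, ht⟩ := exists_ne_zero_le_density_inter_translate (S := S)
    (h0.trans_lt (by nlinarith))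
  set B : Set V := {y | y + t ∈ S ∧ y ∈ S}
  set q := (Submodule.span (ZMod 2) {t}).mkQ
  have hq_surj : Function.Surjective q := Submodule.mkQ_surjective _
  have : Finite (V ⧸ Submodule.span (ZMod 2) {t}) := Finite.of_surjective q hq_surj
  have hqB : q ⁻¹' (q '' B) = B := preimage_image_mkQ_span_singleton fun y hy => by
    simpa [B, add_assoc, ZModModule.add_self, and_comm] using hy
  have hB : density (q '' B) = density B := by
    rw [← density_preimage_of_surjective (f := q.toAddMonoidHom) hq_surj]
    exact congrArg density hqB
  obtain ⟨W, hW, y', hy'⟩ := hq t ht0 (q '' B) (by rw [hB]; linarith)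
  obtain ⟨y, rfl⟩ := hq_surj y'
  refine ⟨W.comap q, ?_, y, fun w hw => ?_⟩
  · have hcomap := finrank_comap_add_finrank hq_surj W
    have hspan := (Submodule.span (ZMod 2) {t}).finrank_quotient_add_finrank
    rw [finrank_span_singleton ht0] at hspan
    lia
  · have : y + w ∈ q ⁻¹' (q '' B) := by
      rw [Set.mem_preimage, map_add]
      exact hy' _ hw
    rw [hqB] at this
    exact this.2

theorem exists_forall_denseSetsContainCosets (h : ℕ) {ε : ℝ} (hε : 0 < ε) :
    ∃ n₀, ∀ (V : Type u) [AddCommGroup V] [Module (ZMod 2) V] [Finite V],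
      n₀ ≤ finrank (ZMod 2) V → DenseSetsContainCosets V h ε := by
  induction h generalizing ε with
  | zero => exact ⟨0, fun V _ _ _ _ => denseSetsContainCosets_zero hε⟩
  | succ h ih =>
    obtain ⟨n₁, hn₁⟩ := ih (ε := ε ^ 2 / 2) (by positivity)
    obtain ⟨n₂, hn₂⟩ := exists_forall_density_submodule_le 0 (ε := ε ^ 2 / 2) (by positivity)
    refine ⟨n₁ + 1 + n₂, fun V _ _ _ hV => DenseSetsContainCosets.succ hε ?_ fun t ht => ?_⟩
    · simpa using hn₂ V (by lia) ⊥ (finrank_bot _ _).le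
    · have : Finite (V ⧸ Submodule.span (ZMod 2) {t}) :=
        Finite.of_surjective _ (Submodule.mkQ_surjective _)
      have hspan := (Submodule.span (ZMod 2) {t}).finrank_quotient_add_finrank
      rw [finrank_span_singleton ht] at hspan
      exact hn₁ _ (by lia)

end DenseCosets

section BoseBurton

variable {V : Type u} [AddCommGroup V] [Module (ZMod 2) V]
variable {E : Type*} [AddCommGroup E] [Module (ZMod 2) E]
variable {M : Set V} {G H : Submodule (ZMod 2) V} {g : E →ₗ[ZMod 2] V} {h : ℕ} {ε δ : ℝ} {x y : V}

/-- The map `g` and the subspace `G` span a Bose–Burton restriction of `M`: the union of the cosets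
`g c + G`, `c ≠ 0`, which is `range g ⊕ G` without `G`, is contained in `M`. -/
structure IsBoseBurton (M : Set V) (G : Submodule (ZMod 2) V) (g : E →ₗ[ZMod 2] V) : Prop where
  notMem : ∀ c ≠ 0, g c ∉ G
  add_mem : ∀ c ≠ 0, ∀ y ∈ G, g c + y ∈ M

/-- `M` has a restriction to the Bose–Burton matroid `∅^{h+j,j}`, the complement of an
`h`-dimensional subspace in a space of dimension `h + j`. -/
def HasBoseBurton (M : Set V) (h j : ℕ) : Prop :=
  ∃ (G : Submodule (ZMod 2) V) (g : (Fin j → ZMod 2) →ₗ[ZMod 2] V),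
    finrank (ZMod 2) G = h ∧ IsBoseBurton M G g

/-- A frame for a Bose–Burton restriction `∅^{finrank G + j, j}` of `M`, where `j = dim E`, such
that `G` is rich in the sense of `DenseSetsContainCosets` and yet `M` has no restriction to
`∅^{h+j+1,j+1}`, so that no large part of `G` can serve to extend the frame. -/
structure IsSaturated (M : Set V) (G : Submodule (ZMod 2) V) (g : E →ₗ[ZMod 2] V) (h : ℕ)
    (ε : ℝ) : Prop extends IsBoseBurton M G g where
  containCosets : DenseSetsContainCosets G h ε
  not_hasBoseBurton : ¬ HasBoseBurton M h (finrank (ZMod 2) E + 1)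

/-- The points of the coset `x + G` missing from `M`, translated into `G`. -/
def missing (M : Set V) (G : Submodule (ZMod 2) V) (x : V) : Set G := {y | x + y ∉ M}

theorem IsBoseBurton.mono (hg : IsBoseBurton M G g) (hHG : H ≤ G) : IsBoseBurton M H g :=
  ⟨fun c hc hcH => hg.notMem c hc (hHG hcH), fun c hc y hy => hg.add_mem c hc y (hHG hy)⟩

theorem IsBoseBurton.add_subtype_comp (hg : IsBoseBurton M G g) (r : E →ₗ[ZMod 2] G) :
    IsBoseBurton M G (g + G.subtype ∘ₗ r) where
  notMem c hc hcG := hg.notMem c hc ((G.add_mem_iff_left (r c).2).1 hcG)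
  add_mem c hc y hy := by
    simpa [add_assoc] using hg.add_mem c hc _ (G.add_mem (r c).2 hy)

theorem IsSaturated.add_subtype_comp (hg : IsSaturated M G g h ε) (r : E →ₗ[ZMod 2] G) :
    IsSaturated M G (g + G.subtype ∘ₗ r) h ε :=
  { hg with toIsBoseBurton := hg.toIsBoseBurton.add_subtype_comp r }

theorem IsBoseBurton.hasBoseBurton [FiniteDimensional (ZMod 2) E] (hg : IsBoseBurton M G g) :
    HasBoseBurton M (finrank (ZMod 2) G) (finrank (ZMod 2) E) := by
  let e : (Fin (finrank (ZMod 2) E) → ZMod 2) ≃ₗ[ZMod 2] E := .ofFinrankEq _ _ (by simp)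
  have he {c} (hc : c ≠ 0) : e c ≠ 0 := e.map_ne_zero_iff.2 hc
  exact ⟨G, g ∘ₗ e.toLinearMap, rfl, fun c hc => hg.notMem _ (he hc),
    fun c hc => hg.add_mem _ (he hc)⟩

theorem IsBoseBurton.coprod_toSpanSingleton (hg : IsBoseBurton M G g)
    (hx : x ∉ G ⊔ LinearMap.range g) (hxM : ∀ c, ∀ y ∈ G, x + g c + y ∈ M) :
    IsBoseBurton M G (g.coprod (LinearMap.toSpanSingleton (ZMod 2) V x)) := by
  have hx' (c : E) : g c + x ∉ G := fun hc => hx <| by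
    rw [← add_sub_cancel_left (g c) x]
    exact sub_mem (Submodule.mem_sup_left hc) (Submodule.mem_sup_right ⟨c, rfl⟩)
  refine ⟨?_, ?_⟩ <;> rintro ⟨c, a⟩ hc <;> obtain rfl | rfl := zmod_two_eq_zero_or_one a
  · simpa using hg.notMem c (by simpa using hc)
  · simpa using hx' c
  · simpa using hg.add_mem c (by simpa using hc)
  · simpa [add_comm x] using hxM c

theorem sup_range_add_subtype_comp_le (r : E →ₗ[ZMod 2] G) :
    G ⊔ LinearMap.range (g + G.subtype ∘ₗ r) ≤ G ⊔ LinearMap.range g := by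
  refine sup_le le_sup_left ?_
  rintro _ ⟨c, rfl⟩
  exact add_mem (Submodule.mem_sup_right ⟨c, rfl⟩) (Submodule.mem_sup_left (r c).2)

theorem density_missing_add (hy : y ∈ G) :
    density (missing M G (x + y)) = density (missing M G x) := by
  have : missing M G (x + y) = Equiv.addLeft (⟨y, hy⟩ : G) ⁻¹' missing M G x := by
    ext z
    simp [missing, add_assoc]
  rw [this, density_preimage_equiv]

theorem expect_density_missing [Fintype V] (M : Set V) (G : Submodule (ZMod 2) V) :
    𝔼 x, density (missing M G x) = density Mᶜ := by
  calc 𝔼 x, density (missing M G x) = 𝔼 y : G, 𝔼 x, Mᶜ.indicator (1 : V → ℝ) (x + y) := by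
        rw [Finset.expect_comm]
        simp only [density_eq_expect]
        rfl
    _ = 𝔼 _y : G, density Mᶜ := by
        refine Finset.expect_congr rfl fun y _ => ?_
        rw [density_eq_expect]
        exact Fintype.expect_equiv (Equiv.addRight (y : V)) _ _ fun x => rfl
    _ = density Mᶜ := Fintype.expect_const _

theorem IsSaturated.density_iInter_compl_missing_lt [FiniteDimensional (ZMod 2) E]
    (hg : IsSaturated M G g h ε) (hx : x ∉ G ⊔ LinearMap.range g) :
    density (⋂ c, (missing M G (x + g c))ᶜ) < ε := by
  by_contra! hdense
  obtain ⟨W, hW, y, hy⟩ := hg.containCosets _ hdense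
  have hWG : W.map G.subtype ≤ G := Submodule.map_subtype_le G W
  have hxy : x + y ∉ W.map G.subtype ⊔ LinearMap.range g := fun hmem => hx <|
    (Submodule.add_mem_iff_left _ (Submodule.mem_sup_left y.2)).1 (sup_le_sup_right hWG _ hmem)
  have hxyM : ∀ c, ∀ w ∈ W.map G.subtype, x + y + g c + w ∈ M := by
    rintro c _ ⟨w, hw, rfl⟩
    have := Set.mem_iInter.1 (hy w hw) c
    rw [add_right_comm x, add_assoc (x + g c)]
    simpa [missing] using this
  have := ((hg.mono hWG).coprod_toSpanSingleton hxy hxyM).hasBoseBurton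
  rw [Submodule.finrank_map_subtype_eq, hW, finrank_prod, finrank_self] at this
  exact hg.not_hasBoseBurton this

theorem IsSaturated.lt_density_iUnion_missing [Finite V] [FiniteDimensional (ZMod 2) E]
    (hg : IsSaturated M G g h ε) (hx : x ∉ G ⊔ LinearMap.range g) :
    1 - ε < density (⋃ c, missing M G (x + g c)) := by
  have := hg.density_iInter_compl_missing_lt hx
  rw [← Set.compl_iUnion, density_compl] at this
  linarith

theorem IsSaturated.le_finrank [Finite V] (hg : IsSaturated M G g h ε) (hε : ε ≤ 1) :
    h ≤ finrank (ZMod 2) G := by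
  obtain ⟨W, rfl, -⟩ := hg.containCosets Set.univ (by rwa [density_univ])
  exact W.finrank_le

variable [Fintype E]

theorem IsSaturated.lt_sum_density_missing [Finite V]
    (hg : IsSaturated M G g h ε) (hx : x ∉ G ⊔ LinearMap.range g) :
    1 - ε < ∑ c, density (missing M G (x + g c)) :=
  (hg.lt_density_iUnion_missing hx).trans_le (density_iUnion_le _)

/- Replacing `g` by `g + r` with `r` valued in `G` translates the sets `missing M G (x + g c)`
independently of each other, so two of them can be made to overlap at least as much as independent
sets would. Since all of them together must almost cover `G`, this overlap is wasted. -/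
theorem IsSaturated.density_missing_mul_lt [Finite V]
    (hg : IsSaturated M G g h ε) (hx : x ∉ G ⊔ LinearMap.range g)
    (hsum : ∑ c, density (missing M G (x + g c)) ≤ 1 + δ)
    {c c' : E} (hc : c ≠ c') :
    density (missing M G (x + g c)) * density (missing M G (x + g c')) < δ + ε := by
  obtain ⟨t, ht⟩ := exists_mul_le_density_inter_translate
    (missing M G (x + g c)) (missing M G (x + g c'))
  obtain ⟨l, hl⟩ := Module.Projective.exists_dual_eq_one (ZMod 2) (sub_ne_zero.2 hc)
  set r : E →ₗ[ZMod 2] G := l.smulRight t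
  set x' : V := x - r c'
  have hx' : x' ∉ G ⊔ LinearMap.range (g + G.subtype ∘ₗ r) := fun hmem =>
    hx ((Submodule.sub_mem_iff_left _ (Submodule.mem_sup_left (r c').2)).1
      (sup_range_add_subtype_comp_le r hmem))
  have hshift (e : E) : x' + (g + G.subtype ∘ₗ r) e = x + g e + r (e - c') := by
    simp [x']; abel
  have hsum' : ∑ e, density (missing M G (x' + (g + G.subtype ∘ₗ r) e)) ≤ 1 + δ := by
    simpa only [hshift, density_missing_add (r _).2] using hsum
  have hinter : {y | y + t ∈ missing M G (x + g c) ∧ y ∈ missing M G (x + g c')} =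
      missing M G (x' + (g + G.subtype ∘ₗ r) c) ∩ missing M G (x' + (g + G.subtype ∘ₗ r) c') := by
    ext y
    simp only [hshift, r, LinearMap.smulRight_apply, hl]
    simp [missing, add_assoc, add_comm (t : V)]
  rw [hinter] at ht
  have hcover := (hg.add_subtype_comp r).lt_density_iUnion_missing hx'
  have hbonf := density_iUnion_add_density_inter_le
    (fun e => missing M G (x' + (g + G.subtype ∘ₗ r) e)) hc
  linarith

end BoseBurton

section ErdosStone

variable {V : Type u} [AddCommGroup V] [Module (ZMod 2) V]
variable {E : Type*} [AddCommGroup E] [Module (ZMod 2) E] [Fintype E]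
variable {M : Set V} {G : Submodule (ZMod 2) V} {g : E →ₗ[ZMod 2] V} {h : ℕ} {ε : ℝ}

theorem expect_sum_density_missing [Fintype V] (M : Set V) (G : Submodule (ZMod 2) V)
    (g : E →ₗ[ZMod 2] V) :
    𝔼 x, ∑ c, density (missing M G (x + g c)) = Fintype.card E * density Mᶜ := by
  have htranslate (c : E) : 𝔼 x, density (missing M G (x + g c)) = density Mᶜ := by
    rw [← expect_density_missing M G]
    exact Fintype.expect_equiv (Equiv.addRight (g c)) _ _ fun x => rfl
  rw [Finset.expect_sum_comm, Finset.sum_congr rfl fun c _ => htranslate c, Finset.sum_const,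
    Finset.card_univ, nsmul_eq_mul]

theorem IsBoseBurton.hasBoseBurton_succ [Finite V] (hg : IsBoseBurton M G g)
    (hG : DenseSetsContainCosets G h ε)
    (hM : Fintype.card E * density Mᶜ <
      (1 - ε) * (1 - density (↑(G ⊔ LinearMap.range g) : Set V))) :
    HasBoseBurton M h (finrank (ZMod 2) E + 1) := by
  have := Fintype.ofFinite V
  by_contra hno
  refine hM.not_ge ?_
  rw [← expect_sum_density_missing M G g, ← density_compl, density_eq_expect, Finset.mul_expect]
  refine Finset.expect_le_expect fun x _ => ?_
  by_cases hx : x ∈ G ⊔ LinearMap.range g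
  · have : 0 ≤ ∑ c, density (missing M G (x + g c)) :=
      Finset.sum_nonneg fun c _ => density_nonneg _
    simpa [hx] using this
  · simpa [hx] using (IsSaturated.lt_sum_density_missing ⟨hg, hG, hno⟩ hx).le

theorem hasBoseBurton_zero (M : Set V) (hh : h ≤ finrank (ZMod 2) V) : HasBoseBurton M h 0 := by
  obtain ⟨G, -, hG⟩ := exists_submodule_le_finrank_eq
    (p := (⊤ : Submodule (ZMod 2) V)) (h := h) (by rwa [finrank_top])
  exact ⟨G, 0, hG, fun c hc => (hc (Subsingleton.elim c 0)).elim,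
    fun c hc => (hc (Subsingleton.elim c 0)).elim⟩

theorem exists_forall_hasBoseBurton_of_le_density (h k : ℕ) {ε : ℝ} (hε : 0 < ε) :
    ∃ n₀, ∀ (V : Type u) [AddCommGroup V] [Module (ZMod 2) V] [Finite V],
      n₀ ≤ finrank (ZMod 2) V → ∀ M : Set V, 1 - 2 / 2 ^ k + ε ≤ density M →
        HasBoseBurton M h k := by
  induction k generalizing h ε with
  | zero => exact ⟨h, fun V _ _ _ hV M _ => hasBoseBurton_zero M hV⟩
  | succ k ih =>
    obtain ⟨h', hcosets⟩ := exists_forall_denseSetsContainCosets.{u} h (ε := ε / 3) (by positivity)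
    obtain ⟨n₁, hframe⟩ := ih h' (ε := 1 / 2 ^ k) (by positivity)
    obtain ⟨n₂, hsmall⟩ := exists_forall_density_submodule_le.{u} (h' + k) (ε := ε / 3)
      (by positivity)
    refine ⟨max n₁ n₂, fun V _ _ _ hV M hM => ?_⟩
    have hK : (1 : ℝ) ≤ 2 ^ k := one_le_pow₀ one_le_two
    have hM' : 1 - 1 / 2 ^ k + ε ≤ density M := by
      convert hM using 3
      rw [pow_succ]
      field_simp
    have hε1 : ε ≤ 1 := by
      have : (1 : ℝ) / 2 ^ k ≤ 1 := div_le_one_of_le₀ hK (by positivity)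
      linarith [density_le_one M]
    obtain ⟨G, g, hG, hg⟩ := hframe V (le_of_max_le_left hV) M (by
      refine le_trans ?_ hM'; ring_nf; linarith)
    have hU := hsmall V (le_of_max_le_right hV) (G ⊔ LinearMap.range g)
      ((finrank_sup_range_le G g).trans (by simp [hG]))
    convert hg.hasBoseBurton_succ (hcosets G hG.ge) ?_ using 1
    · simp
    · have hcompl : (2 : ℝ) ^ k * density Mᶜ ≤ 1 - ε := by
        rw [density_compl]
        have : (2 : ℝ) ^ k * (1 / 2 ^ k) = 1 := by field_simp
        nlinarith
      simp
      nlinarith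

end ErdosStone

section Perturbation

variable {V E : Type*} [AddCommGroup V] [Module (ZMod 2) V] [Finite V]
variable [AddCommGroup E] [Module (ZMod 2) E] [Finite E]
variable {M : Set V} {G H : Submodule (ZMod 2) V} {ρ : ℝ}

theorem density_setOf_apply_add_mem_missing {e : E} (he : e ≠ 0) {y : V} (hy : y ∈ G) (x : V) :
    density {r : E →ₗ[ZMod 2] G | x + r e + y ∉ M} = density (missing M G x) := by
  have : Finite (E →ₗ[ZMod 2] G) := DFunLike.finite _
  rw [← density_missing_add hy]
  refine Eq.trans ?_ (density_preimage_of_surjective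
    (f := (LinearMap.applyₗ e : (E →ₗ[ZMod 2] G) →ₗ[ZMod 2] G).toAddMonoidHom)
    (surjective_applyₗ he) _)
  simp [missing, Set.preimage, add_right_comm]

theorem exists_linearMap_forall_add_mem (g : E →ₗ[ZMod 2] V) (hHG : H ≤ G) (hρ : 0 ≤ ρ)
    (hg : ∀ e ≠ 0, density (missing M G (g e)) ≤ ρ)
    (hsmall : ρ * (2 ^ finrank (ZMod 2) E * 2 ^ finrank (ZMod 2) H) < 1) :
    ∃ r : E →ₗ[ZMod 2] G, ∀ e ≠ 0, ∀ y ∈ H, g e + r e + y ∈ M := by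
  have : Finite (E →ₗ[ZMod 2] G) := DFunLike.finite _
  have := Fintype.ofFinite (E × H)
  set bad : E × H → Set (E →ₗ[ZMod 2] G) := fun p => {r | p.1 ≠ 0 ∧ g p.1 + r p.1 + p.2 ∉ M}
  have hbad (p : E × H) : density (bad p) ≤ ρ := by
    by_cases hp : p.1 = 0
    · simpa [bad, hp, density_empty] using hρ
    · simpa [bad, hp, density_setOf_apply_add_mem_missing hp (hHG p.2.2)] using hg p.1 hp
  have hcard : (Fintype.card (E × H) : ℝ) = 2 ^ finrank (ZMod 2) E * 2 ^ finrank (ZMod 2) H := by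
    rw [← Nat.card_eq_fintype_card, Nat.card_prod,
      natCard_eq_two_pow_finrank, natCard_eq_two_pow_finrank]
    push_cast
    rfl
  obtain ⟨r, hr⟩ := exists_forall_notMem_of_sum_density_lt_one (s := Finset.univ) (S := bad) <|
    calc ∑ p, density (bad p) ≤ ∑ _p : E × H, ρ := Finset.sum_le_sum fun p _ => hbad p
      _ < 1 := by rwa [Finset.sum_const, Finset.card_univ, nsmul_eq_mul, hcard, mul_comm]
  refine ⟨r, fun e he y hy => ?_⟩
  by_contra hmem
  exact hr (e, ⟨y, hy⟩) (Finset.mem_univ _) ⟨he, hmem⟩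

theorem hasBoseBurton_of_density_missing_le {h : ℕ} (g : E →ₗ[ZMod 2] V) (hgG : ∀ e ≠ 0, g e ∉ G)
    (hρ : 0 ≤ ρ) (hg : ∀ e ≠ 0, density (missing M G (g e)) ≤ ρ)
    (hsmall : ρ * (2 ^ finrank (ZMod 2) E * 2 ^ h) < 1) (hh : h ≤ finrank (ZMod 2) G) :
    HasBoseBurton M h (finrank (ZMod 2) E) := by
  obtain ⟨H, hHG, rfl⟩ := exists_submodule_le_finrank_eq hh
  obtain ⟨r, hr⟩ := exists_linearMap_forall_add_mem g hHG hρ hg hsmall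
  have : IsBoseBurton M H (g + G.subtype ∘ₗ r) :=
    ⟨fun e he heH => hgG e he ((G.add_mem_iff_left (r e).2).1 (hHG heH)), hr⟩
  exact this.hasBoseBurton

end Perturbation

section AlmostSubgroup

variable {V : Type*} [AddCommGroup V] [Finite V] {T X : Set V}

theorem exists_mem_forall_add_mem (U : Finset V) (h : #U * density Xᶜ < density T) :
    ∃ z ∈ T, ∀ u ∈ U, z + u ∈ X := by
  have hbad : density (⋃ u ∈ U, (· + u) ⁻¹' Xᶜ) ≤ #U * density Xᶜ := by
    refine (density_biUnion_le U _).trans_eq ?_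
    simp_rw [density_preimage_add_right, Finset.sum_const, nsmul_eq_mul]
  have hgood : 0 < density (T \ ⋃ u ∈ U, (· + u) ⁻¹' Xᶜ) := by
    have := density_union_le (T \ ⋃ u ∈ U, (· + u) ⁻¹' Xᶜ) (⋃ u ∈ U, (· + u) ⁻¹' Xᶜ)
    rw [Set.sdiff_union_self] at this
    linarith [density_mono (Set.subset_union_left (s := T) (t := ⋃ u ∈ U, (· + u) ⁻¹' Xᶜ))]
  obtain ⟨z, hzT, hz⟩ := nonempty_of_density_pos hgood
  exact ⟨z, hzT, by simpa using hz⟩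

variable [Module (ZMod 2) V]

/- For `a, a + v, a', a' + w ∈ T` a typical `z ∈ T` has `z + v = (z + a) + (a + v) ∈ T` and likewise
`z + w ∈ T`, so that `v + w` is the difference of two elements of `T`. -/
theorem exists_submodule_mem_iff_of_add_mem (hT : ∀ a ∈ T, ∀ b ∈ T, a + b ∈ X → a + b ∈ T)
    (hX : 4 * density Xᶜ < density T) :
    ∃ F : Submodule (ZMod 2) V, ∀ v, v ∈ F ↔ ∃ a ∈ T, a + v ∈ T := by
  have hshift {a v z : V} (ha : a ∈ T) (hav : a + v ∈ T) (hz : z ∈ T) (hza : z + a ∈ X)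
      (hzv : z + v ∈ X) : z + v ∈ T := by
    have heq : z + v = z + a + (a + v) := by
      rw [add_assoc, ← add_assoc a, ZModModule.add_self, zero_add]
    rw [heq] at hzv ⊢
    exact hT _ (hT z hz a ha hza) _ hav hzv
  let F : AddSubgroup V :=
    { carrier := {v | ∃ a ∈ T, a + v ∈ T}
      zero_mem' := by
        obtain ⟨a, ha⟩ := nonempty_of_density_pos
          (lt_of_le_of_lt (mul_nonneg zero_le_four (density_nonneg _)) hX)
        exact ⟨a, ha, by rwa [add_zero]⟩
      add_mem' := by
        rintro v w ⟨a, ha, hav⟩ ⟨a', ha', haw⟩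
        obtain ⟨z, hz, hzX⟩ := exists_mem_forall_add_mem {a, v, a', w}
          (lt_of_le_of_lt (mul_le_mul_of_nonneg_right
            (mod_cast Finset.card_le_four) (density_nonneg _)) hX)
        refine ⟨z + v, hshift ha hav hz (hzX a (by simp)) (hzX v (by simp)), ?_⟩
        rw [← add_assoc, add_assoc z, ZModModule.add_self, add_zero]
        exact hshift ha' haw hz (hzX a' (by simp)) (hzX w (by simp))
      neg_mem' := by simp [ZModModule.neg_eq_self] }
  exact ⟨AddSubgroup.toZModSubmodule 2 F, fun v => Iff.rfl⟩

theorem exists_isCompl_range_of_add_mem {E : Type*} [AddCommGroup E] [Module (ZMod 2) E]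
    {g : E →ₗ[ZMod 2] V} (hcover : ∀ x ∈ X, ∃ c, x + g c ∈ T)
    (hsep : ∀ t ∈ T, ∀ c, t + g c ∈ T → c = 0) (hT : ∀ a ∈ T, ∀ b ∈ T, a + b ∈ X → a + b ∈ T)
    (hX : 4 * density Xᶜ < density T) :
    ∃ F : Submodule (ZMod 2) V, IsCompl F (LinearMap.range g) ∧ T ⊆ F ∧
      ∀ a ∈ T, ∀ v, a + v ∈ T → v ∈ F := by
  obtain ⟨F, hF⟩ := exists_submodule_mem_iff_of_add_mem hT hX
  have htypical (v : V) : ∃ z ∈ T, z + v ∈ X := by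
    obtain ⟨z, hz, hzX⟩ := exists_mem_forall_add_mem (T := T) (X := X) {v} (by
      rw [Finset.card_singleton, Nat.cast_one]
      linarith [density_nonneg Xᶜ])
    exact ⟨z, hz, hzX v (Finset.mem_singleton_self v)⟩
  refine ⟨F, ⟨?_, ?_⟩, fun t ht => ?_, fun a ha v hav => (hF v).2 ⟨a, ha, hav⟩⟩
  · rw [Submodule.disjoint_def]
    rintro _ hc ⟨c, rfl⟩
    obtain ⟨a, ha, hac⟩ := (hF _).1 hc
    rw [hsep a ha c hac, map_zero]
  · rw [codisjoint_iff, Submodule.eq_top_iff']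
    intro v
    obtain ⟨z, hz, hzv⟩ := htypical v
    obtain ⟨c, hc⟩ := hcover (z + v) hzv
    refine Submodule.mem_sup.2 ⟨v + g c, (hF _).2 ⟨z, hz, by rwa [← add_assoc]⟩, g c, ⟨c, rfl⟩, ?_⟩
    rw [add_assoc, ZModModule.add_self, add_zero]
  · obtain ⟨z, hz, hzt⟩ := htypical t
    exact (hF t).2 ⟨z, hz, hT z hz t ht hzt⟩

end AlmostSubgroup

section Stability

variable {V : Type u} [AddCommGroup V] [Module (ZMod 2) V]
variable {E : Type*} [AddCommGroup E] [Module (ZMod 2) E] [Fintype E]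
variable {M : Set V} {F G : Submodule (ZMod 2) V} {g : E →ₗ[ZMod 2] V} {h : ℕ} {ε δ ρ : ℝ}
variable {a b x y : V}

/-- The points `x` for which the missing parts of the cosets `x + g c + G` hardly overlap; all
points outside `G ⊔ range g` would be typical with `δ = 0` if `M` were extremal. -/
def typicalPoints (M : Set V) (G : Submodule (ZMod 2) V) (g : E →ₗ[ZMod 2] V) (δ : ℝ) : Set V :=
  {x | x ∉ G ⊔ LinearMap.range g ∧ ∑ c, density (missing M G (x + g c)) ≤ 1 + δ}

/-- The typical points `x` such that, among the cosets `x + g c + G`, only `x + G` itself misses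
more than a proportion `ρ`; in an extremal `M` these form the subspace complementary to `M`. -/
def peakPoints (M : Set V) (G : Submodule (ZMod 2) V) (g : E →ₗ[ZMod 2] V) (δ ρ : ℝ) : Set V :=
  {x | x ∈ typicalPoints M G g δ ∧ ρ < density (missing M G x) ∧
    ∀ c ≠ 0, density (missing M G (x + g c)) ≤ ρ}

theorem add_apply_mem_typicalPoints (hx : x ∈ typicalPoints M G g δ) (c : E) :
    x + g c ∈ typicalPoints M G g δ := by
  refine ⟨fun hmem => hx.1 ((Submodule.add_mem_iff_left _
    (Submodule.mem_sup_right (LinearMap.mem_range_self g c))).1 hmem), le_of_eq_of_le ?_ hx.2⟩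
  simp_rw [add_assoc, ← map_add]
  exact Equiv.sum_comp (Equiv.addLeft c) fun c => density (missing M G (x + g c))

theorem add_mem_peakPoints (hx : x ∈ peakPoints M G g δ ρ) (hy : y ∈ G) :
    x + y ∈ peakPoints M G g δ ρ := by
  have hshift (c : E) : density (missing M G (x + y + g c)) = density (missing M G (x + g c)) := by
    rw [add_right_comm, density_missing_add hy]
  obtain ⟨⟨hxU, hsum⟩, hpeak, hsmall⟩ := hx
  refine ⟨⟨fun hmem => hxU ((Submodule.add_mem_iff_left _
    (Submodule.mem_sup_left hy)).1 hmem), ?_⟩, ?_, ?_⟩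
  · simpa only [hshift] using hsum
  · rwa [density_missing_add hy]
  · simpa only [hshift] using hsmall

theorem eq_zero_of_add_apply_mem_peakPoints (hx : x ∈ peakPoints M G g δ ρ) {c : E}
    (hc : x + g c ∈ peakPoints M G g δ ρ) : c = 0 := by
  by_contra hc0
  exact (hx.2.2 c hc0).not_gt hc.2.1

theorem density_missing_le_of_peakPoints
    (hpeak : ∀ x ∈ typicalPoints M G g δ, ∃ c, x + g c ∈ peakPoints M G g δ ρ)
    (hx : x ∈ typicalPoints M G g δ) (hxT : x ∉ peakPoints M G g δ ρ) :
    density (missing M G x) ≤ ρ := by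
  obtain ⟨c, hc⟩ := hpeak x hx
  have hc0 : c ≠ 0 := by
    rintro rfl
    rw [map_zero, add_zero] at hc
    exact hxT hc
  have := hc.2.2 c hc0
  rwa [add_assoc, ZModModule.add_self, add_zero] at this

variable [Finite V]

theorem IsSaturated.exists_add_apply_mem_peakPoints (hg : IsSaturated M G g h ε) (hε : ε ≤ 1 / 2)
    (hρ : 2 * Fintype.card E * ρ < 1) (hδ : 2 * Fintype.card E * (δ + ε) ≤ ρ)
    (hx : x ∈ typicalPoints M G g δ) : ∃ c, x + g c ∈ peakPoints M G g δ ρ := by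
  set m : E → ℝ := fun c => density (missing M G (x + g c))
  obtain ⟨c, -, hc⟩ : ∃ c ∈ Finset.univ, 1 / (2 * Fintype.card E) < m c := by
    refine Finset.exists_lt_of_sum_lt (lt_of_le_of_lt ?_ (hg.lt_sum_density_missing hx.1))
    rw [Finset.sum_const, Finset.card_univ, nsmul_eq_mul]
    field_simp
    linarith
  have hother {c' : E} (hne : c ≠ c') : m c' ≤ ρ := by
    have hmul : m c * m c' < δ + ε := hg.density_missing_mul_lt hx.1 hx.2 hne
    have hm : 1 / (2 * Fintype.card E) * m c' ≤ m c * m c' := by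
      gcongr
      exact density_nonneg _
    calc m c' = 2 * Fintype.card E * (1 / (2 * Fintype.card E) * m c') := by field_simp
      _ ≤ 2 * Fintype.card E * (δ + ε) := by gcongr; linarith
      _ ≤ ρ := hδ
  refine ⟨c, add_apply_mem_typicalPoints hx c, lt_trans ?_ hc, fun e he => ?_⟩
  · rw [lt_div_iff₀ (by positivity)]
    linarith
  · rw [add_assoc, ← map_add]
    exact hother (by simpa using he)

/- In `range g ⊔ span {a, b}`, the only cosets of `G` that can miss more than a proportion `ρ` are
those of `a`, `b` and `a + b + g c`; for `c ≠ 0` some hyperplane avoids all three of them, and hence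
yields a Bose–Burton restriction of order `dim E + 1`. -/
theorem IsSaturated.eq_zero_of_peakPoints (hg : IsSaturated M G g h ε) (hε : ε ≤ 1) (hρ : 0 ≤ ρ)
    (hsmall : ρ * (2 ^ (finrank (ZMod 2) E + 1) * 2 ^ h) < 1) (ha : a ∈ peakPoints M G g δ ρ)
    (hb : b ∈ peakPoints M G g δ ρ) (hab : a + b ∈ typicalPoints M G g δ) {c : E}
    (hc : a + b + g c ∈ peakPoints M G g δ ρ) : c = 0 := by
  by_contra hc0
  obtain ⟨l, hl⟩ := Module.Projective.exists_dual_eq_one (ZMod 2) hc0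
  set f := (g + l.smulRight b).coprod (LinearMap.toSpanSingleton (ZMod 2) V (a + b))
  have hcases {p : E × ZMod 2} (hp : p ≠ 0) := coprod_toSpanSingleton_apply_eq_or g hl a b hp
  have hnotMem {x : V} (hx : x ∈ typicalPoints M G g δ) (e : E) : x + g e ∉ G := fun hmem =>
    (add_apply_mem_typicalPoints hx e).1 (Submodule.mem_sup_left hmem)
  have hfG : ∀ p ≠ 0, f p ∉ G := fun p hp => by
    obtain ⟨hp, h | h | h⟩ | ⟨-, h⟩ := hcases hp <;> rw [h]
    exacts [hg.notMem _ hp, hnotMem ha.1 _, hnotMem hb.1 _, hnotMem hab _]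
  have hfM : ∀ p ≠ 0, density (missing M G (f p)) ≤ ρ := fun p hp => by
    obtain ⟨hp, h | h | h⟩ | ⟨hp, h⟩ := hcases hp <;> rw [h]
    · have : missing M G (g p.1) = ∅ :=
        Set.eq_empty_of_forall_notMem fun y hy => hy (hg.add_mem _ hp _ y.2)
      rwa [this, density_empty]
    · exact ha.2.2 _ hp
    · exact hb.2.2 _ hp
    · have := hc.2.2 (p.1 - c) (sub_ne_zero.2 hp)
      rwa [add_assoc, ← map_add, add_sub_cancel] at this
  refine hg.not_hasBoseBurton ?_
  simpa using hasBoseBurton_of_density_missing_le f hfG hρ hfM (by simpa using hsmall)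
    (hg.le_finrank hε)

theorem IsSaturated.mul_density_compl_typicalPoints_le (hg : IsSaturated M G g h ε) (hε : 0 ≤ ε)
    (hM : Fintype.card E * density Mᶜ ≤ 1) :
    δ * density (typicalPoints M G g δ)ᶜ ≤
      ε + (1 + δ) * density (↑(G ⊔ LinearMap.range g) : Set V) := by
  have := Fintype.ofFinite V
  set X := typicalPoints M G g δ
  set U : Set V := ↑(G ⊔ LinearMap.range g)
  have hpoint (x : V) : δ * Xᶜ.indicator 1 x + (1 - ε) ≤
      ∑ c, density (missing M G (x + g c)) + (1 + δ) * U.indicator 1 x := by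
    by_cases hxU : x ∈ U
    · have hxX : x ∉ X := fun hx => hx.1 hxU
      have : 0 ≤ ∑ c, density (missing M G (x + g c)) :=
        Finset.sum_nonneg fun c _ => density_nonneg _
      simp [hxU, hxX]
      linarith
    · by_cases hxX : x ∈ X
      · simpa [hxU, hxX] using (hg.lt_sum_density_missing hxU).le
      · have : 1 + δ < ∑ c, density (missing M G (x + g c)) :=
          not_le.1 fun hle => hxX ⟨hxU, hle⟩
        simp [hxU, hxX]
        linarith
  have hmean := Finset.expect_le_expect (s := Finset.univ) fun x _ => hpoint x
  rw [Finset.expect_add_distrib, Finset.expect_add_distrib, ← Finset.mul_expect,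
    ← Finset.mul_expect, ← density_eq_expect, ← density_eq_expect, Fintype.expect_const,
    expect_sum_density_missing] at hmean
  linarith

theorem density_typicalPoints_le
    (hpeak : ∀ x ∈ typicalPoints M G g δ, ∃ c, x + g c ∈ peakPoints M G g δ ρ) :
    density (typicalPoints M G g δ) ≤ Fintype.card E * density (peakPoints M G g δ ρ) := by
  calc density (typicalPoints M G g δ)
      ≤ density (⋃ c, (· + g c) ⁻¹' peakPoints M G g δ ρ) :=
        density_mono fun x hx => Set.mem_iUnion.2 (hpeak x hx)
    _ ≤ ∑ c, density ((· + g c) ⁻¹' peakPoints M G g δ ρ) := density_iUnion_le _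
    _ = Fintype.card E * density (peakPoints M G g δ ρ) := by
        simp_rw [density_preimage_add_right, Finset.sum_const, Finset.card_univ, nsmul_eq_mul]

theorem density_diff_le_of_missing_le {X : Set V} (hGF : G ≤ F) (hρ : 0 ≤ ρ)
    (hX : ∀ x ∈ X, x ∉ F → density (missing M G x) ≤ ρ) :
    density (Mᶜ \ F) ≤ ρ + density Xᶜ := by
  have := Fintype.ofFinite V
  have hcompl : Mᶜ \ F = (M ∪ F)ᶜ := by rw [Set.compl_union, Set.sdiff_eq]
  have hsub (x : V) : missing (M ∪ F) G x ⊆ missing M G x := fun y hy hyM => hy (Or.inl hyM)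
  have hpoint (x : V) : density (missing (M ∪ F) G x) ≤ ρ + Xᶜ.indicator 1 x := by
    by_cases hxX : x ∈ X
    · suffices density (missing (M ∪ F) G x) ≤ ρ by simpa [hxX] using this
      by_cases hxF : x ∈ F
      · have : missing (M ∪ F) G x = ∅ := Set.eq_empty_of_forall_notMem fun y hy =>
          hy (Or.inr (F.add_mem hxF (hGF y.2)))
        rwa [this, density_empty]
      · exact (density_mono (hsub x)).trans (hX x hxX hxF)
    · have := density_le_one (missing (M ∪ F) G x)
      simp [hxX]
      linarith
  calc density (Mᶜ \ F) = 𝔼 x, density (missing (M ∪ F) G x) := by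
        rw [expect_density_missing, hcompl]
    _ ≤ 𝔼 x, (ρ + Xᶜ.indicator 1 x) := Finset.expect_le_expect fun x _ => hpoint x
    _ = ρ + density Xᶜ := by
        rw [Finset.expect_add_distrib, Fintype.expect_const, density_eq_expect]

/- `F` is the subspace of which `peakPoints` is almost a coset. -/
theorem IsSaturated.exists_isCompl_range (hg : IsSaturated M G g h ε) (hε : ε ≤ 1 / 2)
    (hρ : 0 ≤ ρ) (hρK : 2 * Fintype.card E * ρ < 1) (hδ : 2 * Fintype.card E * (δ + ε) ≤ ρ)
    (hsmall : ρ * (2 ^ (finrank (ZMod 2) E + 1) * 2 ^ h) < 1)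
    (hX : 8 * Fintype.card E * density (typicalPoints M G g δ)ᶜ ≤ 1) :
    ∃ F : Submodule (ZMod 2) V, IsCompl F (LinearMap.range g) ∧
      density (Mᶜ \ F) ≤ ρ + density (typicalPoints M G g δ)ᶜ := by
  set X := typicalPoints M G g δ
  set T := peakPoints M G g δ ρ
  have hpeak : ∀ x ∈ X, ∃ c, x + g c ∈ T := fun x hx =>
    hg.exists_add_apply_mem_peakPoints hε hρK hδ hx
  have hadd : ∀ a ∈ T, ∀ b ∈ T, a + b ∈ X → a + b ∈ T := by
    intro a ha b hb hab
    obtain ⟨c, hc⟩ := hpeak _ hab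
    have hc0 := hg.eq_zero_of_peakPoints (hε.trans (by norm_num)) hρ hsmall ha hb hab hc
    rwa [hc0, map_zero, add_zero] at hc
  have hXT : 4 * density Xᶜ < density T := by
    have hK : (1 : ℝ) ≤ Fintype.card E := mod_cast Fintype.card_pos
    have hXT' : density X ≤ Fintype.card E * density T := density_typicalPoints_le hpeak
    have hXc : density Xᶜ = 1 - density X := density_compl X
    have : density Xᶜ ≤ Fintype.card E * density Xᶜ := le_mul_of_one_le_left (density_nonneg _) hK
    refine lt_of_mul_lt_mul_left (a := (Fintype.card E : ℝ)) ?_ (by positivity)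
    linarith
  obtain ⟨F, hF, hTF, hdiff⟩ := exists_isCompl_range_of_add_mem hpeak
    (fun t ht c hc => eq_zero_of_add_apply_mem_peakPoints ht hc) hadd hXT
  obtain ⟨t, ht⟩ := nonempty_of_density_pos
    (hXT.trans_le' (mul_nonneg zero_le_four (density_nonneg _)))
  exact ⟨F, hF, density_diff_le_of_missing_le (fun y hy => hdiff t ht y (add_mem_peakPoints ht hy))
    hρ fun x hx hxF => density_missing_le_of_peakPoints hpeak hx fun hxT => hxF (hTF hxT)⟩

end Stability

section StabilityTheorem

theorem exists_stability_constants {K H ε : ℝ} (hK : 1 ≤ K) (hH : 1 ≤ H) (hε : 0 < ε) :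
    ∃ ρ δ ε' : ℝ, 0 ≤ ρ ∧ 0 < δ ∧ δ ≤ 1 ∧ 0 < ε' ∧ ε' ≤ 1 / 2 ∧ 2 * K * ρ < 1 ∧
      2 * K * (δ + ε') ≤ ρ ∧ ρ * (2 * K * H) < 1 ∧
      ∀ d, δ * d ≤ 3 * ε' → ρ + d ≤ ε ∧ 8 * K * d ≤ 1 := by
  set ρ := min (ε / 2) (1 / (4 * K * H))
  set η := min (ε / 2) (1 / (8 * K))
  have hρ : 0 < ρ := by positivity
  have hη : 0 < η := by positivity
  have hρε : ρ ≤ ε / 2 := min_le_left _ _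
  have hρH : ρ * (4 * K * H) ≤ 1 := (le_div_iff₀ (by positivity)).1 (min_le_right _ _)
  have hηK : η * (8 * K) ≤ 1 := (le_div_iff₀ (by positivity)).1 (min_le_right _ _)
  have hρK : 4 * K * ρ ≤ 1 := le_trans (by nlinarith [mul_pos (zero_lt_one.trans_le hK) hρ]) hρH
  have hη1 : η ≤ 1 / 8 := by nlinarith
  set δ := ρ / (4 * K)
  have hδ : 0 < δ := by positivity
  have hδρ : 4 * K * δ = ρ := by simp only [δ]; field_simp
  have hδ1 : δ ≤ 1 := by nlinarith
  refine ⟨ρ, δ, δ * η / 3, hρ.le, hδ, hδ1, by positivity, by nlinarith, by linarith, ?_,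
    by linarith, fun d hd => ?_⟩
  · nlinarith [mul_pos hδ (zero_lt_one.trans_le hK)]
  · have hdη : d ≤ η := le_of_mul_le_mul_left (by linarith) hδ
    exact ⟨by linarith [min_le_left (ε / 2) (1 / (8 * K))], by nlinarith⟩

theorem exists_forall_isSaturated_exists_isCompl_range (E : Type*) [AddCommGroup E]
    [Module (ZMod 2) E] [Fintype E] (h : ℕ) {ε : ℝ} (hε : 0 < ε) :
    ∃ ε' > 0, ∀ (V : Type u) [AddCommGroup V] [Module (ZMod 2) V] [Finite V] (M : Set V)
      (G : Submodule (ZMod 2) V) (g : E →ₗ[ZMod 2] V), IsSaturated M G g h ε' →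
        density (↑(G ⊔ LinearMap.range g) : Set V) ≤ ε' → Fintype.card E * density Mᶜ ≤ 1 →
          ∃ F : Submodule (ZMod 2) V, IsCompl F (LinearMap.range g) ∧ density (Mᶜ \ F) ≤ ε := by
  have hK : (Fintype.card E : ℝ) = 2 ^ finrank (ZMod 2) E := by
    simp [Module.card_eq_pow_finrank (K := ZMod 2) (V := E)]
  obtain ⟨ρ, δ, ε', hρ, hδ, hδ1, hε', hε'2, hρK, hδK, hsmall, hη⟩ := exists_stability_constants
    (K := Fintype.card E) (H := 2 ^ h) (mod_cast Fintype.card_pos) (one_le_pow₀ one_le_two) hε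
  refine ⟨ε', hε', fun V _ _ _ M G g hg hU hM => ?_⟩
  have hX : δ * density (typicalPoints M G g δ)ᶜ ≤ 3 * ε' := by
    have := hg.mul_density_compl_typicalPoints_le (δ := δ) hε'.le hM
    nlinarith
  obtain ⟨F, hF, hdiff⟩ := hg.exists_isCompl_range hε'2 hρ hρK hδK
    (by rwa [pow_succ', ← hK]) (hη _ hX).2
  exact ⟨F, hF, hdiff.trans (hη _ hX).1⟩

theorem IsBoseBurton.injective {V : Type u} [AddCommGroup V] [Module (ZMod 2) V] {E : Type*}
    [AddCommGroup E] [Module (ZMod 2) E] {M : Set V} {G : Submodule (ZMod 2) V}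
    {g : E →ₗ[ZMod 2] V} (hg : IsBoseBurton M G g) : Function.Injective g :=
  (injective_iff_map_eq_zero g).2 fun c hc => by_contra fun hc0 =>
    hg.notMem c hc0 (hc ▸ G.zero_mem)

theorem exists_forall_exists_submodule_density_diff_le (h k : ℕ) {ε : ℝ} (hε : 0 < ε) :
    ∃ n₀, ∀ (V : Type u) [AddCommGroup V] [Module (ZMod 2) V] [Finite V],
      n₀ ≤ finrank (ZMod 2) V → ∀ M : Set V, 1 - 1 / 2 ^ k ≤ density M →
        ¬ HasBoseBurton M h (k + 1) → ∃ F : Submodule (ZMod 2) V,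
          finrank (ZMod 2) F + k = finrank (ZMod 2) V ∧ density (Mᶜ \ F) ≤ ε := by
  obtain ⟨ε', hε', hstable⟩ :=
    exists_forall_isSaturated_exists_isCompl_range.{u} (Fin k → ZMod 2) h hε
  obtain ⟨h', hcosets⟩ := exists_forall_denseSetsContainCosets.{u} h hε'
  obtain ⟨n₁, hframe⟩ := exists_forall_hasBoseBurton_of_le_density.{u} h' k (ε := 1 / 2 ^ k)
    (by positivity)
  obtain ⟨n₂, hsmall⟩ := exists_forall_density_submodule_le.{u} (h' + k) hε'
  refine ⟨max n₁ n₂, fun V _ _ _ hV M hM hno => ?_⟩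
  obtain ⟨G, g, hG, hg⟩ := hframe V (le_of_max_le_left hV) M (by convert hM using 1; ring)
  have hcompl : (Fintype.card (Fin k → ZMod 2) : ℝ) * density Mᶜ ≤ 1 := by
    rw [density_compl]
    have : (2 : ℝ) ^ k * (1 / 2 ^ k) = 1 := by field_simp
    have : (2 : ℝ) ^ k * (1 - 1 / 2 ^ k) ≤ 2 ^ k * density M := by gcongr
    simp
    linarith
  obtain ⟨F, hF, hdiff⟩ := hstable V M G g ⟨hg, hcosets G hG.ge, by simpa using hno⟩
    (hsmall V (le_of_max_le_right hV) _ ((finrank_sup_range_le G g).trans (by simp [hG]))) hcompl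
  refine ⟨F, ?_, hdiff⟩
  have := Submodule.finrank_add_eq_of_isCompl hF
  rwa [LinearMap.finrank_range_of_inj hg.injective, finrank_fin_fun] at this

end StabilityTheorem

section Restriction

variable {U V W : Type*} [AddCommGroup U] [Module (ZMod 2) U] [AddCommGroup V] [Module (ZMod 2) V]
  [AddCommGroup W] [Module (ZMod 2) W]

theorem HasRestriction.trans {A : Set U} {B : Set V} {C : Set W} (hAB : HasRestriction A B)
    (hBC : HasRestriction B C) : HasRestriction A C := by
  obtain ⟨ψ, hψ, hψA⟩ := hAB
  obtain ⟨χ, hχ, hχB⟩ := hBC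
  refine ⟨χ ∘ₗ ψ, hχ.comp hψ, ?_⟩
  rintro _ ⟨a, ha, rfl⟩
  exact hχB ⟨_, hψA ⟨a, ha, rfl⟩, rfl⟩

theorem HasRestriction.finrank_le [Finite V] {A : Set U} {B : Set V}
    (h : HasRestriction A B) : finrank (ZMod 2) U ≤ finrank (ZMod 2) V :=
  LinearMap.finrank_le_finrank_of_injective h.choose_spec.1

theorem HasRestriction.ncard_le [Finite V] {A : Set U} {B : Set V} (h : HasRestriction A B) :
    A.ncard ≤ B.ncard := by
  obtain ⟨ψ, hψ, hψA⟩ := h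
  rw [← Set.ncard_image_of_injective A hψ]
  exact Set.ncard_le_ncard hψA

theorem HasRestriction.symm_of_le [Finite U] [Finite V] {A : Set U} {B : Set V}
    (h : HasRestriction A B) (hdim : finrank (ZMod 2) V ≤ finrank (ZMod 2) U)
    (hcard : B.ncard ≤ A.ncard) : HasRestriction B A := by
  have hdim' := h.finrank_le.antisymm hdim
  obtain ⟨ψ, hψ, hψA⟩ := h
  have hB : ψ '' A = B :=
    Set.eq_of_subset_of_ncard_le hψA (by rwa [Set.ncard_image_of_injective A hψ])
  set e := ψ.linearEquivOfInjective hψ hdim'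
  refine ⟨e.symm, e.symm.injective, ?_⟩
  rw [← hB]
  rintro _ ⟨_, ⟨a, ha, rfl⟩, rfl⟩
  have : e.symm (ψ a) = a := e.symm_apply_apply a
  rwa [LinearEquiv.coe_coe, this]

theorem IsBoseBurton.hasRestriction {E : Type*} [AddCommGroup E] [Module (ZMod 2) E] [Finite V]
    [Finite W] {M : Set V} {G : Submodule (ZMod 2) V} {g : E →ₗ[ZMod 2] V}
    (hg : IsBoseBurton M G g) {N : Set W} {φ : W →ₗ[ZMod 2] E} (hφ : ∀ x ∈ N, φ x ≠ 0)
    (hW : finrank (ZMod 2) W ≤ finrank (ZMod 2) G) : HasRestriction N M := by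
  obtain ⟨ι, hι⟩ := finrank_le_iff_exists_linearMap.1 hW
  refine ⟨g ∘ₗ φ + G.subtype ∘ₗ ι, (injective_iff_map_eq_zero _).2 fun x hx => ?_, ?_⟩
  · have hφx : φ x = 0 := by
      by_contra hφx
      refine hg.notMem _ hφx ?_
      have hgx : g (φ x) = -ι x := eq_neg_of_add_eq_zero_left hx
      rw [hgx]
      exact G.neg_mem (ι x).2
    refine hι ?_
    rw [map_zero, ← Submodule.coe_eq_zero]
    simpa [hφx] using hx
  · rintro _ ⟨x, hx, rfl⟩
    exact hg.add_mem _ (hφ x hx) _ (ι x).2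

end Restriction

section CritNum

theorem critNum_le_finrank {n : ℕ} {N : Set (Fin n → ZMod 2)} {W : Type*} [AddCommGroup W]
    [Module (ZMod 2) W] [FiniteDimensional (ZMod 2) W] {φ : (Fin n → ZMod 2) →ₗ[ZMod 2] W}
    (hφ : ∀ x ∈ N, φ x ≠ 0) : critNum N ≤ finrank (ZMod 2) W := by
  let e : W ≃ₗ[ZMod 2] (Fin (finrank (ZMod 2) W) → ZMod 2) := .ofFinrankEq _ _ (by simp)
  exact Nat.sInf_le ⟨e ∘ₗ φ, fun x hx => e.map_ne_zero_iff.2 (hφ x hx)⟩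

theorem exists_linearMap_of_critNum_pos {n : ℕ} {N : Set (Fin n → ZMod 2)} (h : 0 < critNum N) :
    ∃ φ : (Fin n → ZMod 2) →ₗ[ZMod 2] (Fin (critNum N) → ZMod 2), ∀ x ∈ N, φ x ≠ 0 :=
  Nat.sInf_mem (Nat.nonempty_of_pos_sInf h)

end CritNum

section Copy

variable {n k m : ℕ} {M₀ : Set (Fin (n - k) → ZMod 2)} {M : Set (Fin n → ZMod 2)}

theorem isCopyNnt_iff : IsCopyNnt M₀ n k M ↔ ∃ (F : Submodule (ZMod 2) (Fin n → ZMod 2))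
    (e : (Fin (n - k) → ZMod 2) ≃ₗ[ZMod 2] F),
      (∀ x, (e x : Fin n → ZMod 2) ∈ M ↔ x ∈ M₀) ∧ ∀ v ∉ F, v ∈ M := by
  refine ⟨?_, ?_⟩
  · rintro ⟨F, hF, θ, hθ, hθF, rfl⟩
    refine ⟨F, LinearMap.linearEquivOfInjective (θ.codRestrict F hθF)
      (fun x y hxy => hθ (congrArg Subtype.val hxy)) (by simp [hF]), fun x => ?_,
      fun v hv => Or.inr hv⟩
    have hx : θ x ∈ θ '' M₀ ∪ {v | v ∉ F} ↔ x ∈ M₀ := by simp [hθF x, hθ.eq_iff]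
    exact hx
  · rintro ⟨F, e, heM, hFM⟩
    refine ⟨F, by simp [← e.finrank_eq], F.subtype ∘ₗ e, F.subtype_injective.comp e.injective,
      fun x => (e x).2, Set.ext fun v => ?_⟩
    by_cases hv : v ∈ F
    · obtain ⟨x, hx⟩ := e.surjective ⟨v, hv⟩
      obtain rfl : (e x : Fin n → ZMod 2) = v := congrArg Subtype.val hx
      simp [heM]
    · simp [hv, hFM v hv]

theorem IsCopyNnt.zero_notMem (h : IsCopyNnt M₀ n k M) (h0 : 0 ∉ M₀) : 0 ∉ M := by
  obtain ⟨F, e, heM, -⟩ := isCopyNnt_iff.1 h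
  have := heM 0
  rw [map_zero, Submodule.coe_zero] at this
  exact fun h0M => h0 (this.1 h0M)

theorem exists_isCopyNnt (M₀ : Set (Fin (n - k) → ZMod 2)) :
    ∃ M : Set (Fin n → ZMod 2), IsCopyNnt M₀ n k M := by
  obtain ⟨F, -, hF⟩ := exists_submodule_le_finrank_eq (K := ZMod 2)
    (p := (⊤ : Submodule (ZMod 2) (Fin n → ZMod 2))) (h := n - k) (by simp)
  let e : (Fin (n - k) → ZMod 2) ≃ₗ[ZMod 2] F := .ofFinrankEq _ _ (by simp [hF])
  exact ⟨_, F, hF, F.subtype ∘ₗ e, F.subtype_injective.comp e.injective, fun x => (e x).2, rfl⟩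

theorem ncard_add_two_pow_add_ncard_diff {V : Type*} [AddCommGroup V] [Module (ZMod 2) V] [Finite V]
    {F : Submodule (ZMod 2) V} (e : (Fin m → ZMod 2) ≃ₗ[ZMod 2] F) (M : Set V) :
    M.ncard + 2 ^ m + (Mᶜ \ F).ncard = 2 ^ finrank (ZMod 2) V + {x | (e x : V) ∈ M}.ncard := by
  have hF : (F : Set V).ncard = 2 ^ m := by
    have : Nat.card F = 2 ^ finrank (ZMod 2) F := natCard_eq_two_pow_finrank
    rwa [← e.finrank_eq, finrank_fin_fun] at this
  have hM₀ : (M ∩ F).ncard = {x | (e x : V) ∈ M}.ncard := by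
    rw [← Set.ncard_image_of_injective _ (F.subtype_injective.comp e.injective)]
    congr 1
    ext v
    refine ⟨fun ⟨hvM, hvF⟩ => ⟨e.symm ⟨v, hvF⟩, by simpa using hvM, by simp⟩, ?_⟩
    rintro ⟨x, hx, rfl⟩
    exact ⟨hx, (e x).2⟩
  have hunion : Mᶜ \ F = (M ∪ F)ᶜ := by rw [Set.compl_union, Set.sdiff_eq]
  have := Set.ncard_union_add_ncard_inter M F
  have := Set.ncard_add_ncard_compl (M ∪ F)
  rw [natCard_eq_two_pow_finrank] at this
  rw [hunion]
  lia

theorem IsCopyNnt.ncard_add_two_pow (h : IsCopyNnt M₀ n k M) :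
    M.ncard + 2 ^ (n - k) = 2 ^ n + M₀.ncard := by
  obtain ⟨F, e, heM, hFM⟩ := isCopyNnt_iff.1 h
  have hdiff : Mᶜ \ F = ∅ := Set.eq_empty_of_forall_notMem fun v hv => hv.1 (hFM v hv.2)
  simpa [hdiff, heM] using ncard_add_two_pow_add_ncard_diff e M

end Copy

section Completion

theorem density_missing_le_of_notMem {V : Type*} [AddCommGroup V] [Module (ZMod 2) V] [Finite V]
    {F : Submodule (ZMod 2) V} {k : ℕ} {M : Set V} {x : V}
    (hF : finrank (ZMod 2) F + k = finrank (ZMod 2) V) (hx : x ∉ F) :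
    density (missing M F x) ≤ 2 ^ k * density (Mᶜ \ F) := by
  have hinj : (missing M F x).ncard ≤ (Mᶜ \ F).ncard :=
    Set.ncard_le_ncard_of_injOn (fun y => x + y)
      (fun y hy => ⟨hy, fun hmem => hx ((F.add_mem_iff_left y.2).1 hmem)⟩)
      (fun y _ z _ hyz => Subtype.ext (add_left_cancel hyz))
  rw [density, density, natCard_eq_two_pow_finrank, natCard_eq_two_pow_finrank, ← hF]
  push_cast
  rw [pow_add, mul_div_assoc', mul_comm (2 ^ finrank (ZMod 2) F), mul_div_mul_left _ _ (by simp)]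
  gcongr

variable {V : Type*} [AddCommGroup V] [Module (ZMod 2) V] [Finite V]
variable {U : Type*} [AddCommGroup U] [Module (ZMod 2) U] [Finite U]

theorem exists_injective_extension {F' Q : Submodule (ZMod 2) U} (hFQ : IsCompl F' Q)
    {F : Submodule (ZMod 2) V} {k : ℕ} {M : Set V}
    (hF : finrank (ZMod 2) F + k = finrank (ZMod 2) V) (hQ : finrank (ZMod 2) Q ≤ k)
    (σ : F' →ₗ[ZMod 2] F) (hσ : Function.Injective σ)
    (hsmall : 2 ^ k * density (Mᶜ \ F) * (2 ^ k * 2 ^ finrank (ZMod 2) U) < 1) :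
    ∃ ψ : U →ₗ[ZMod 2] V, Function.Injective ψ ∧ (∀ y : F', ψ y = σ y) ∧ ∀ u ∉ F', ψ u ∈ M := by
  obtain ⟨g, hg⟩ := exists_linearMap_forall_notMem (V := Q) F (by lia)
  have hρ : 0 ≤ 2 ^ k * density (Mᶜ \ F) := mul_nonneg (by positivity) (density_nonneg _)
  obtain ⟨r, hr⟩ := exists_linearMap_forall_add_mem (M := M) (G := F)
    (H := (LinearMap.range σ).map F.subtype) g (Submodule.map_subtype_le _ _) hρ
    (fun q hq => density_missing_le_of_notMem hF (hg q hq)) (lt_of_le_of_lt (by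
      gcongr
      · norm_num
      · norm_num
      · rw [Submodule.finrank_map_subtype_eq]
        exact (LinearMap.finrank_range_le σ).trans (Submodule.finrank_le F')) hsmall)
  set ψ := LinearMap.ofIsCompl hFQ (F.subtype ∘ₗ σ) (g + F.subtype ∘ₗ r)
  have hψ (y : F') (q : Q) : ψ (y + q) = σ y + (g q + r q) := by
    rw [map_add, LinearMap.ofIsCompl_apply_left, LinearMap.ofIsCompl_apply_right]
    rfl
  have hdecomp (u : U) : ∃ (y : F') (q : Q), (y : U) + q = u := by
    obtain ⟨y, hy, q, hq, rfl⟩ := Submodule.mem_sup.1 (hFQ.sup_eq_top ▸ Submodule.mem_top (x := u))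
    exact ⟨⟨y, hy⟩, ⟨q, hq⟩, rfl⟩
  refine ⟨ψ, (injective_iff_map_eq_zero ψ).2 fun u hu => ?_, fun y => ?_, fun u hu => ?_⟩
  · obtain ⟨y, q, rfl⟩ := hdecomp u
    rw [hψ] at hu
    have hq : q = 0 := by
      by_contra hq
      refine hg q hq ((F.add_mem_iff_left (r q).2).1 ?_)
      rw [eq_neg_of_add_eq_zero_right hu]
      exact F.neg_mem (σ y).2
    have hy : y = 0 := hσ (by simpa [hq] using hu)
    simp [hq, hy]
  · exact LinearMap.ofIsCompl_apply_left hFQ y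
  · obtain ⟨y, q, rfl⟩ := hdecomp u
    have hq : q ≠ 0 := by
      rintro rfl
      exact hu (by simp)
    rw [hψ, add_comm]
    exact hr q hq _ (Submodule.mem_map_of_mem (LinearMap.mem_range_self σ y))

theorem IsCopyNnt.hasRestriction {d n k : ℕ} {D : Set (Fin d → ZMod 2)} {M' : Set (Fin n → ZMod 2)}
    (hM' : IsCopyNnt D n k M') {F : Submodule (ZMod 2) V} {M : Set V}
    (hF : finrank (ZMod 2) F + k = finrank (ZMod 2) V) (hn : n ≤ finrank (ZMod 2) F)
    (hD : HasRestriction D {y : F | (y : V) ∈ M})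
    (hsmall : 2 ^ k * density (Mᶜ \ F) * (2 ^ k * 2 ^ n) < 1) : HasRestriction M' M := by
  obtain ⟨F', hF', θ, hθ, hθF', rfl⟩ := hM'
  obtain ⟨p, hp, hpD⟩ := hD
  obtain ⟨Q, hQ⟩ := F'.exists_isCompl
  have hdim := Submodule.finrank_add_eq_of_isCompl hQ
  rw [finrank_fin_fun] at hdim
  obtain ⟨σ, hσ, hσp⟩ := exists_injective_comp_eq (f := θ.codRestrict F' hθF')
    (fun x y hxy => hθ (congrArg Subtype.val hxy)) hp (by lia)
  obtain ⟨ψ, hψ, hψF', hψM⟩ := exists_injective_extension (M := M) hQ hF (by lia) σ hσ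
    (by rwa [finrank_fin_fun])
  refine ⟨ψ, hψ, ?_⟩
  rintro _ ⟨_, ⟨x, hx, rfl⟩ | hv, rfl⟩
  · have hxp : σ (θ.codRestrict F' hθF' x) = p x := LinearMap.congr_fun hσp x
    have := hψF' (θ.codRestrict F' hθF' x)
    rw [hxp] at this
    exact this ▸ hpD ⟨x, hx, rfl⟩
  · exact hψM _ hv

end Completion

section DecompositionFamily

variable {𝒩 : Set (Σ k : ℕ, Set (Fin k → ZMod 2))} {n k : ℕ}

/-- `M` is an `𝒩`-free matroid. -/
def IsFreeMatroid {V : Type*} [AddCommGroup V] [Module (ZMod 2) V]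
    (𝒩 : Set (Σ k : ℕ, Set (Fin k → ZMod 2))) (M : Set V) : Prop :=
  0 ∉ M ∧ ∀ N ∈ 𝒩, ¬ HasRestriction N.2 M

/-- The matroid `D` is a candidate for the decomposition family: `D^{dim N,k}` has an
`N`-restriction for some `N ∈ 𝒩`. The members of `decompFam 𝒩 k` are the minimal candidates. -/
def IsDecomposing (𝒩 : Set (Σ k : ℕ, Set (Fin k → ZMod 2))) (k : ℕ)
    (D : Σ k : ℕ, Set (Fin k → ZMod 2)) : Prop :=
  ∃ N ∈ 𝒩, ∃ M : Set (Fin N.1 → ZMod 2), IsCopyNnt D.2 N.1 k M ∧ HasRestriction N.2 M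

theorem IsDecomposing.exists_mem_decompFam {D : Σ k : ℕ, Set (Fin k → ZMod 2)}
    (hD : IsDecomposing 𝒩 k D) (h0 : 0 ∉ D.2) :
    ∃ D' ∈ decompFam 𝒩 k, HasRestriction D'.2 D.2 := by
  obtain ⟨D', ⟨hD', h0', hD'D⟩, hmin⟩ := exists_minimalFor_of_wellFoundedLT
    (fun D' => IsDecomposing 𝒩 k D' ∧ 0 ∉ D'.2 ∧ HasRestriction D'.2 D.2)
    (fun D' => D'.1 + D'.2.ncard)
    ⟨D, hD, h0, LinearMap.id, Function.injective_id, by simp⟩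
  refine ⟨D', ⟨h0', hD', fun D'' h0'' hD'' hle => ?_⟩, hD'D⟩
  have hdim := hle.finrank_le
  have hcard := hle.ncard_le
  rw [finrank_fin_fun, finrank_fin_fun] at hdim
  have hsize := hmin ⟨hD'', h0'', hle.trans hD'D⟩ (by dsimp only; lia)
  dsimp only at hsize
  exact hle.symm_of_le (by simp; lia) (by lia)

/- Cut the copy of `N` with the subspace whose complement lies in `M`: the part of `N` inside it
restricts to `M₀`, and it decomposes `N`. -/
theorem exists_isDecomposing_hasRestriction {M₀ : Set (Fin (n - k) → ZMod 2)}
    {M : Set (Fin n → ZMod 2)} (hM : IsCopyNnt M₀ n k M) {N : Σ k : ℕ, Set (Fin k → ZMod 2)}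
    (hN : N ∈ 𝒩) (h0 : 0 ∉ N.2) (hNM : HasRestriction N.2 M) :
    ∃ D, IsDecomposing 𝒩 k D ∧ 0 ∉ D.2 ∧ HasRestriction D.2 M₀ := by
  obtain ⟨ψ, hψ, hψN⟩ := hNM
  obtain ⟨F, e, heM, -⟩ := isCopyNnt_iff.1 hM
  have hcomap := finrank_add_finrank_le_finrank_comap_add ψ F
  rw [← e.finrank_eq, finrank_fin_fun, finrank_fin_fun, finrank_fin_fun] at hcomap
  obtain ⟨F', hF'F, hF'⟩ := exists_submodule_le_finrank_eq (p := F.comap ψ) (h := N.1 - k) (by lia)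
  let e' : (Fin (N.1 - k) → ZMod 2) ≃ₗ[ZMod 2] F' := .ofFinrankEq _ _ (by simp [hF'])
  set D : Set (Fin (N.1 - k) → ZMod 2) := {x | (e' x : Fin N.1 → ZMod 2) ∈ N.2}
  have hcopy : IsCopyNnt D N.1 k (N.2 ∪ {v | v ∉ F'}) :=
    isCopyNnt_iff.2 ⟨F', e', fun x => by simp [D], fun v hv => Or.inr hv⟩
  refine ⟨⟨_, D⟩, ⟨N, hN, _, hcopy, LinearMap.id, Function.injective_id, by simp⟩, by simpa [D], ?_⟩
  have hres : Function.Injective (ψ.restrict hF'F) := fun x y hxy =>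
    Subtype.ext (hψ (congrArg Subtype.val hxy))
  refine ⟨e.symm ∘ₗ ψ.restrict hF'F ∘ₗ e',
    e.symm.injective.comp (hres.comp e'.injective), ?_⟩
  rintro _ ⟨x, hx, rfl⟩
  refine (heM _).1 ?_
  simpa using hψN ⟨_, hx, rfl⟩

theorem IsFreeMatroid.of_isCopyNnt {M₀ : Set (Fin (n - k) → ZMod 2)} {M : Set (Fin n → ZMod 2)}
    (hM₀ : IsFreeMatroid (decompFam 𝒩 k) M₀) (hM : IsCopyNnt M₀ n k M)
    (h0 : ∀ N ∈ 𝒩, 0 ∉ N.2) : IsFreeMatroid 𝒩 M := by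
  refine ⟨hM.zero_notMem hM₀.1, fun N hN hNM => ?_⟩
  obtain ⟨D, hD, hD0, hDM⟩ := exists_isDecomposing_hasRestriction hM hN (h0 N hN) hNM
  obtain ⟨D', hD', hle⟩ := hD.exists_mem_decompFam hD0
  exact hM₀.2 D' hD' (hle.trans hDM)

theorem IsDecomposing.nonempty {D : Σ k : ℕ, Set (Fin k → ZMod 2)} (hD : IsDecomposing 𝒩 k D)
    (hk : ∀ N ∈ 𝒩, k < critNum N.2) : D.2.Nonempty := by
  obtain ⟨N, hN, _, ⟨F, hF, θ, -, -, rfl⟩, ψ, -, hψN⟩ := hD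
  by_contra! hempty
  have hφ : ∀ x ∈ N.2, (F.mkQ ∘ₗ ψ) x ≠ 0 := fun x hx => by
    simpa [hempty, Submodule.Quotient.mk_eq_zero] using hψN ⟨x, hx, rfl⟩
  have hquot := F.finrank_quotient_add_finrank
  rw [finrank_fin_fun] at hquot
  have := (hk N hN).trans_le (critNum_le_finrank hφ)
  lia

theorem isFreeMatroid_decompFam_empty (hk : ∀ N ∈ 𝒩, k < critNum N.2) (n : ℕ) :
    IsFreeMatroid (decompFam 𝒩 k) (∅ : Set (Fin n → ZMod 2)) := by
  refine ⟨Set.notMem_empty 0, fun D hD hle => ?_⟩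
  obtain ⟨ψ, -, hψD⟩ := hle
  obtain ⟨x, hx⟩ := IsDecomposing.nonempty hD.2.1 hk
  exact hψD ⟨x, hx, rfl⟩

theorem IsFreeMatroid.preimage_decompFam {V : Type*} [AddCommGroup V] [Module (ZMod 2) V]
    [Finite V] {M : Set V} (hM : IsFreeMatroid 𝒩 M) {F : Submodule (ZMod 2) V} {m d : ℕ}
    (e : (Fin m → ZMod 2) ≃ₗ[ZMod 2] F) (hF : finrank (ZMod 2) F + k = finrank (ZMod 2) V)
    (hd : ∀ N ∈ 𝒩, N.1 ≤ d) (hdm : d ≤ m)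
    (hsmall : 2 ^ k * density (Mᶜ \ F) * (2 ^ k * 2 ^ d) < 1) :
    IsFreeMatroid (decompFam 𝒩 k) {x | (e x : V) ∈ M} := by
  have hFm : finrank (ZMod 2) F = m := by rw [← e.finrank_eq, finrank_fin_fun]
  refine ⟨fun h0 => hM.1 (by simpa using h0), fun D hD hDM => ?_⟩
  obtain ⟨-, ⟨N, hN, M', hM', hNM'⟩, -⟩ := hD
  refine hM.2 N hN (hNM'.trans (hM'.hasRestriction hF ((hd N hN).trans (hdm.trans hFm.ge)) ?_ ?_))
  · refine hDM.trans ⟨e, e.injective, ?_⟩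
    rintro _ ⟨x, hx, rfl⟩
    exact hx
  · refine lt_of_le_of_lt ?_ hsmall
    have := density_nonneg (Mᶜ \ F)
    gcongr
    · norm_num
    · exact hd N hN

theorem IsFreeMatroid.not_hasBoseBurton {V : Type*} [AddCommGroup V] [Module (ZMod 2) V] [Finite V]
    {M : Set V} (hM : IsFreeMatroid 𝒩 M) {N : Σ k : ℕ, Set (Fin k → ZMod 2)} (hN : N ∈ 𝒩)
    (hk : critNum N.2 = k + 1) : ¬ HasBoseBurton M N.1 (k + 1) := by
  rw [← hk]
  rintro ⟨G, g, hG, hg⟩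
  obtain ⟨φ, hφ⟩ := exists_linearMap_of_critNum_pos (N := N.2) (by lia)
  exact hM.2 N hN (hg.hasRestriction hφ (by simp [hG]))

theorem le_density_of_two_pow_le {V : Type*} [AddCommGroup V] [Module (ZMod 2) V] [Finite V]
    {M : Set V} {k : ℕ} (hk : k ≤ finrank (ZMod 2) V)
    (hM : 2 ^ finrank (ZMod 2) V ≤ M.ncard + 2 ^ (finrank (ZMod 2) V - k)) :
    1 - 1 / 2 ^ k ≤ density M := by
  have hM' : (2 : ℝ) ^ finrank (ZMod 2) V ≤ M.ncard + 2 ^ finrank (ZMod 2) V / 2 ^ k := by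
    rw [div_eq_mul_inv, ← pow_sub₀ _ two_ne_zero hk]
    exact_mod_cast hM
  rw [density, natCard_eq_two_pow_finrank, Nat.cast_pow, Nat.cast_ofNat,
    le_div_iff₀ (by positivity)]
  linarith [hM', mul_comm (1 / (2 : ℝ) ^ k) (2 ^ finrank (ZMod 2) V),
    mul_one_div ((2 : ℝ) ^ finrank (ZMod 2) V) (2 ^ k)]

theorem exists_forall_exists_isFreeMatroid_decompFam (hfin : 𝒩.Finite)
    (hk : ∃ N ∈ 𝒩, critNum N.2 = k + 1) :
    ∃ n₀, ∀ n ≥ n₀, ∀ M : Set (Fin n → ZMod 2), IsFreeMatroid 𝒩 M →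
      2 ^ n ≤ M.ncard + 2 ^ (n - k) → ∃ M₀ : Set (Fin (n - k) → ZMod 2),
        IsFreeMatroid (decompFam 𝒩 k) M₀ ∧ M.ncard + 2 ^ (n - k) ≤ 2 ^ n + M₀.ncard ∧
          (M.ncard + 2 ^ (n - k) = 2 ^ n + M₀.ncard → IsCopyNnt M₀ n k M) := by
  obtain ⟨N₀, hN₀, hN₀k⟩ := hk
  obtain ⟨d, hd⟩ := (hfin.image Sigma.fst).bddAbove
  obtain ⟨n₁, hstable⟩ := exists_forall_exists_submodule_density_diff_le N₀.1 k
    (ε := 1 / (2 * (2 ^ k * 2 ^ k * 2 ^ d))) (by positivity)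
  refine ⟨max n₁ (k + d), fun n hn M hM hMcard => ?_⟩
  have hdim : finrank (ZMod 2) (Fin n → ZMod 2) = n := finrank_fin_fun _
  obtain ⟨F, hF, hdiff⟩ := hstable (Fin n → ZMod 2) (by lia) M
    (le_density_of_two_pow_le (by lia) (by rwa [hdim])) (hM.not_hasBoseBurton hN₀ hN₀k)
  have hsmall : 2 ^ k * density (Mᶜ \ F) * (2 ^ k * 2 ^ d) < 1 := by
    rw [le_div_iff₀ (by positivity)] at hdiff
    linarith
  let e : (Fin (n - k) → ZMod 2) ≃ₗ[ZMod 2] F := .ofFinrankEq _ _ (by simp; lia)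
  have hcount := ncard_add_two_pow_add_ncard_diff e M
  rw [hdim] at hcount
  refine ⟨_, hM.preimage_decompFam e hF (fun N hN => hd ⟨N, hN, rfl⟩) (by lia) hsmall,
    by lia, fun heq => ?_⟩
  have hempty : Mᶜ \ F = ∅ := (Set.ncard_eq_zero).1 (by lia)
  refine isCopyNnt_iff.2 ⟨F, e, fun x => Iff.rfl, fun v hv => ?_⟩
  by_contra hvM
  exact (hempty ▸ (⟨hvM, hv⟩ : v ∈ Mᶜ \ F) : v ∈ (∅ : Set _))

theorem bddAbove_ncard_isFreeMatroid : BddAbove {m | ∃ M : Set (Fin n → ZMod 2), 0 ∉ M ∧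
    (∀ N ∈ 𝒩, ¬ HasRestriction N.2 M) ∧ M.ncard = m} := by
  refine ⟨Nat.card (Fin n → ZMod 2), ?_⟩
  rintro _ ⟨M, -, -, rfl⟩
  exact Set.ncard_le_card M

theorem IsFreeMatroid.ncard_le_exNumFam {M : Set (Fin n → ZMod 2)} (hM : IsFreeMatroid 𝒩 M) :
    M.ncard ≤ exNumFam 𝒩 n :=
  le_csSup bddAbove_ncard_isFreeMatroid ⟨M, hM.1, hM.2, rfl⟩

theorem IsFreeMatroid.exists_ncard_eq_exNumFam {M : Set (Fin n → ZMod 2)}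
    (hM : IsFreeMatroid 𝒩 M) :
    ∃ M' : Set (Fin n → ZMod 2), IsFreeMatroid 𝒩 M' ∧ M'.ncard = exNumFam 𝒩 n := by
  obtain ⟨M', h0, hM', hcard⟩ : exNumFam 𝒩 n ∈ {m | ∃ M : Set (Fin n → ZMod 2), 0 ∉ M ∧
      (∀ N ∈ 𝒩, ¬ HasRestriction N.2 M) ∧ M.ncard = m} :=
    Nat.sSup_mem ⟨_, M, hM.1, hM.2, rfl⟩ bddAbove_ncard_isFreeMatroid
  exact ⟨M', ⟨h0, hM'⟩, hcard⟩

end DecompositionFamily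

/-- Main reduction theorem: Turán numbers in terms of the decomposition family. -/
theorem main_reduction (𝒩 : Set (Σ k : ℕ, Set (Fin k → ZMod 2)))
    (h𝒩ne : 𝒩.Nonempty) (h𝒩fin : 𝒩.Finite)
    (h𝒩mat : ∀ N ∈ 𝒩, 0 ∉ N.2 ∧ N.2.Nonempty)
    (k : ℕ) (hk1 : ∀ N ∈ 𝒩, k + 1 ≤ critNum N.2) (hk2 : ∃ N ∈ 𝒩, critNum N.2 = k + 1) :
    ∃ n₀ : ℕ, ∀ n ≥ n₀,
      exNumFam 𝒩 n = 2 ^ n - 2 ^ (n - k) + exNumFam (decompFam 𝒩 k) (n - k) ∧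
      ∀ M : Set (Fin n → ZMod 2), 0 ∉ M → (∀ N ∈ 𝒩, ¬ HasRestriction N.2 M) →
        (M.ncard = exNumFam 𝒩 n ↔
          ∃ M₀ : Set (Fin (n - k) → ZMod 2), 0 ∉ M₀ ∧
            (∀ D ∈ decompFam 𝒩 k, ¬ HasRestriction D.2 M₀) ∧
            M₀.ncard = exNumFam (decompFam 𝒩 k) (n - k) ∧
            IsCopyNnt M₀ n k M) := by
  obtain ⟨n₀, hupper⟩ := exists_forall_exists_isFreeMatroid_decompFam h𝒩fin hk2
  refine ⟨n₀, fun n hn => ?_⟩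
  have hpow : 2 ^ (n - k) ≤ 2 ^ n := Nat.pow_le_pow_right two_pos (Nat.sub_le n k)
  obtain ⟨M₀, hM₀, hM₀card⟩ := (isFreeMatroid_decompFam_empty hk1 (n - k)).exists_ncard_eq_exNumFam
  obtain ⟨M₁, hM₁⟩ := exists_isCopyNnt (n := n) M₀
  have hM₁free : IsFreeMatroid 𝒩 M₁ := hM₀.of_isCopyNnt hM₁ fun N hN => (h𝒩mat N hN).1
  have hM₁card := hM₁.ncard_add_two_pow
  have hlower := hM₁free.ncard_le_exNumFam
  obtain ⟨M₂, hM₂, hM₂card⟩ := hM₁free.exists_ncard_eq_exNumFam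
  obtain ⟨M₃, hM₃, hM₂₃, -⟩ := hupper n hn M₂ hM₂ (by lia)
  have hM₃card := hM₃.ncard_le_exNumFam
  refine ⟨by lia, fun M h0 hM => ⟨fun hcard => ?_, ?_⟩⟩
  · obtain ⟨M', hM', hle, hcopy⟩ := hupper n hn M ⟨h0, hM⟩ (by lia)
    have := hM'.ncard_le_exNumFam
    exact ⟨M', hM'.1, hM'.2, by lia, hcopy (by lia)⟩
  · rintro ⟨M', -, -, hcard, hcopy⟩
    have := hcopy.ncard_add_two_pow
    lia
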